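/- There exists ε₀ > 0 such that for all 0 < ε ≤ ε₀ the following hold. (i) If λ ∈ ℝ, ν is a nonnegative integer, and u(r,θ) = u^r(r)cos(νθ) is a nonzero C² solution of D_ε u = λu on the closed unit disc, then λ = (∫_0^{1−r₀} p(1−r)|(u^r)'(r)|² dr − ν²∫_0^{1−r₀} q(1−r)|u^r(r)|² dr)/(∫_0^{1−r₀} w(1−r)|u^r(r)|² dr); in particular λ ≥ 0. (ii) Every C² solution of D_ε u = 0 on the closed unit disc is constant, and constants are solutions. (iii) If u₁, u₂ are C² eigenfunctions of D_ε on the closed disc with distinct eigenvalues, then ∫∫_{{r < 1−r₀}} w(1−r)·u₁(r,θ)·u₂(r,θ) dr dθ = 0. -/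

import Mathlib

open Real Set Filter Topology MeasureTheory

noncomputable def s0 (ε t : ℝ) : ℝ :=
  if 0 ≤ t ∧ t ≤ ε then π/2 + (t/ε) * Real.sqrt (1 - (t/ε)^2) + Real.arcsin (t/ε) else π

noncomputable def s12 (ε t : ℝ) : ℝ :=
  if 0 ≤ t ∧ t ≤ ε then -(2/3) * (1 - (t/ε)^2) ^ ((3:ℝ)/2) else 0

noncomputable def s2 (ε t : ℝ) : ℝ :=
  if 0 ≤ t ∧ t ≤ ε then
    π/8 + (1/12) * ((t/ε) * Real.sqrt (1 - (t/ε)^2) * (5 - 2*(t/ε)^2) + 3 * Real.arcsin (t/ε))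
  else π/4

noncomputable def s22 (ε t : ℝ) : ℝ :=
  if 0 ≤ t ∧ t ≤ ε then
    π/8 + (1/4) * ((t/ε) * Real.sqrt (1 - (t/ε)^2) * (2*(t/ε)^2 - 1) + Real.arcsin (t/ε))
  else π/4

noncomputable def s3 (ε t : ℝ) : ℝ :=
  if 0 ≤ t ∧ t ≤ ε then -(2/15) * (1 - (t/ε)^2) ^ ((5:ℝ)/2) else 0

noncomputable def s32 (ε t : ℝ) : ℝ :=
  if 0 ≤ t ∧ t ≤ ε then -(2/15) * (2 + 3*(t/ε)^2) * (1 - (t/ε)^2) ^ ((3:ℝ)/2) else 0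

noncomputable def phi11 (ε t : ℝ) : ℝ :=
  (1/2) * (s22 ε t * s2 ε t - s3 ε t * s12 ε t) / ((s12 ε t)^2 - s22 ε t * s0 ε t)

noncomputable def phi22 (ε t : ℝ) : ℝ :=
  (1/2) * ((s22 ε t)^2 - s32 ε t * s12 ε t) / ((s12 ε t)^2 - s22 ε t * s0 ε t)

noncomputable def phi2d (ε t : ℝ) : ℝ :=
  s12 ε t / ((s12 ε t)^2 - s22 ε t * s0 ε t)

/-- The principal Sturm–Liouville coefficient on the disc, as a function of the
radius `r`; this is `p(1−r)` in the paper's notation. -/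
noncomputable def pd (ε r0 r : ℝ) : ℝ :=
  (1/8) * (1 - ε) * Real.sign (1 - r0 - r) *
    Real.exp (∫ s in (1-ε)..r, (phi11 ε (1-s) + s * phi2d ε (1-s)) / (s * phi22 ε (1-s)))

/-- `q(1−r)` as a function of `r`. -/
noncomputable def qd (ε r0 r : ℝ) : ℝ :=
  -(pd ε r0 r / r^2) * (phi11 ε (1-r) / phi22 ε (1-r))

/-- The weight `w(1−r)` as a function of `r`. -/
noncomputable def wd (ε r0 r : ℝ) : ℝ := -pd ε r0 r / phi22 ε (1-r)

/-- The point of the plane (seen as `ℂ`) with polar coordinates `(r, θ)`. -/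
noncomputable def pol (r θ : ℝ) : ℂ := (r : ℂ) * Complex.exp ((θ : ℂ) * Complex.I)

/-- Radial partial derivative of `F` at `(r, θ)`. -/
noncomputable def Fr (F : ℂ → ℝ) (r θ : ℝ) : ℝ := deriv (fun t : ℝ => F (pol t θ)) r

/-- Second radial partial derivative of `F` at `(r, θ)`. -/
noncomputable def Frr (F : ℂ → ℝ) (r θ : ℝ) : ℝ :=
  deriv (deriv (fun t : ℝ => F (pol t θ))) r

/-- Second angular partial derivative of `F` at `(r, θ)`. -/
noncomputable def Ftt (F : ℂ → ℝ) (r θ : ℝ) : ℝ :=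
  deriv (deriv (fun s : ℝ => F (pol r s))) θ

/-- `F` is a `C²` function on the closed unit disc satisfying `D_ε F = λ F`
everywhere (expressed in polar coordinates). -/
def IsDiscSol (ε lam : ℝ) (F : ℂ → ℝ) : Prop :=
  ContDiffOn ℝ 2 F (Metric.closedBall 0 1) ∧
  ∀ r ∈ Ioc (0:ℝ) 1, ∀ θ : ℝ,
    phi11 ε (1-r) * ((1/r) * Fr F r θ + (1/r^2) * Ftt F r θ) +
      phi22 ε (1-r) * Frr F r θ + phi2d ε (1-r) * Fr F r θ = lam * F (pol r θ)

noncomputable def S0 (x : ℝ) : ℝ := π/2 + x * Real.sqrt (1 - x^2) + Real.arcsin x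
noncomputable def S12 (x : ℝ) : ℝ := -(2/3) * (1 - x^2) ^ ((3:ℝ)/2)
noncomputable def S2 (x : ℝ) : ℝ :=
  π/8 + (1/12) * (x * Real.sqrt (1 - x^2) * (5 - 2*x^2) + 3 * Real.arcsin x)
noncomputable def S22 (x : ℝ) : ℝ :=
  π/8 + (1/4) * (x * Real.sqrt (1 - x^2) * (2*x^2 - 1) + Real.arcsin x)
noncomputable def S3 (x : ℝ) : ℝ := -(2/15) * (1 - x^2) ^ ((5:ℝ)/2)
noncomputable def S32 (x : ℝ) : ℝ := -(2/15) * (2 + 3*x^2) * (1 - x^2) ^ ((3:ℝ)/2)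
noncomputable def SN (x : ℝ) : ℝ := (S22 x)^2 - S32 x * S12 x
noncomputable def SD (x : ℝ) : ℝ := (S12 x)^2 - S22 x * S0 x
noncomputable def SA (x : ℝ) : ℝ := S22 x * S2 x - S3 x * S12 x

noncomputable def XX (ε t : ℝ) : ℝ := min (t/ε) 1

lemma XX_mem {ε t : ℝ} (he : 0 < ε) (ht : 0 ≤ t) : XX ε t ∈ Icc (0:ℝ) 1 :=
  ⟨le_min (by positivity) zero_le_one, min_le_right _ _⟩

lemma XX_le {ε t : ℝ} (he : 0 < ε) (h : t ≤ ε) : XX ε t = t/ε :=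
  min_eq_left ((div_le_one he).2 h)

lemma XX_ge {ε t : ℝ} (he : 0 < ε) (h : ε ≤ t) : XX ε t = 1 :=
  min_eq_right ((one_le_div he).2 h)

lemma s0_eq {ε t : ℝ} (he : 0 < ε) (ht : 0 ≤ t) : s0 ε t = S0 (XX ε t) := by
  unfold s0
  split_ifs with h
  · rw [XX_le he h.2]; rfl
  · rw [XX_ge he (by by_contra hh; exact h ⟨ht, (not_le.1 hh).le⟩)]; simp [S0]
lemma s12_eq {ε t : ℝ} (he : 0 < ε) (ht : 0 ≤ t) : s12 ε t = S12 (XX ε t) := by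
  unfold s12
  split_ifs with h
  · rw [XX_le he h.2]; rfl
  · rw [XX_ge he (by by_contra hh; exact h ⟨ht, (not_le.1 hh).le⟩)]; simp [S12]
lemma s2_eq {ε t : ℝ} (he : 0 < ε) (ht : 0 ≤ t) : s2 ε t = S2 (XX ε t) := by
  unfold s2
  split_ifs with h
  · rw [XX_le he h.2]; rfl
  · rw [XX_ge he (by by_contra hh; exact h ⟨ht, (not_le.1 hh).le⟩)]; simp [S2]; ring
lemma s22_eq {ε t : ℝ} (he : 0 < ε) (ht : 0 ≤ t) : s22 ε t = S22 (XX ε t) := by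
  unfold s22
  split_ifs with h
  · rw [XX_le he h.2]; rfl
  · rw [XX_ge he (by by_contra hh; exact h ⟨ht, (not_le.1 hh).le⟩)]; simp [S22]; ring
lemma s3_eq {ε t : ℝ} (he : 0 < ε) (ht : 0 ≤ t) : s3 ε t = S3 (XX ε t) := by
  unfold s3
  split_ifs with h
  · rw [XX_le he h.2]; rfl
  · rw [XX_ge he (by by_contra hh; exact h ⟨ht, (not_le.1 hh).le⟩)]; simp [S3]
lemma s32_eq {ε t : ℝ} (he : 0 < ε) (ht : 0 ≤ t) : s32 ε t = S32 (XX ε t) := by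
  unfold s32
  split_ifs with h
  · rw [XX_le he h.2]; rfl
  · rw [XX_ge he (by by_contra hh; exact h ⟨ht, (not_le.1 hh).le⟩)]; simp [S32]

lemma phi11_eq {ε t : ℝ} (he : 0 < ε) (ht : 0 ≤ t) :
    phi11 ε t = (1/2) * SA (XX ε t) / SD (XX ε t) := by
  simp only [phi11, s0_eq he ht, s12_eq he ht, s2_eq he ht, s22_eq he ht, s3_eq he ht, SA, SD]
lemma phi22_eq {ε t : ℝ} (he : 0 < ε) (ht : 0 ≤ t) :
    phi22 ε t = (1/2) * SN (XX ε t) / SD (XX ε t) := by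
  simp only [phi22, s0_eq he ht, s12_eq he ht, s22_eq he ht, s32_eq he ht, SN, SD]
lemma phi2d_eq {ε t : ℝ} (he : 0 < ε) (ht : 0 ≤ t) :
    phi2d ε t = S12 (XX ε t) / SD (XX ε t) := by
  simp only [phi2d, s0_eq he ht, s12_eq he ht, s22_eq he ht, SD]

lemma cS0 : Continuous S0 := by unfold S0; fun_prop
lemma cS2 : Continuous S2 := by unfold S2; fun_prop
lemma cS22 : Continuous S22 := by unfold S22; fun_prop
lemma crp (a : ℝ) (ha : 0 ≤ a) : Continuous (fun x : ℝ => (1 - x^2) ^ a) :=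
  Continuous.rpow_const (by fun_prop) (fun _ => Or.inr ha)
lemma cS12 : Continuous S12 := by
  unfold S12; exact continuous_const.mul (crp _ (by norm_num))
lemma cS3 : Continuous S3 := by
  unfold S3; exact continuous_const.mul (crp _ (by norm_num))
lemma cS32 : Continuous S32 := by
  unfold S32; exact (by fun_prop : Continuous fun x : ℝ => -(2/15) * (2 + 3*x^2)).mul (crp _ (by norm_num))
lemma cSN : Continuous SN := (cS22.pow 2).sub (cS32.mul cS12)
lemma cSD : Continuous SD := (cS12.pow 2).sub (cS22.mul cS0)
lemma cSA : Continuous SA := (cS22.mul cS2).sub (cS3.mul cS12)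

lemma u_mem {x : ℝ} (hx : x ∈ Icc (0:ℝ) 1) : 0 ≤ 1 - x^2 ∧ 1 - x^2 ≤ 1 := by
  constructor <;> nlinarith [hx.1, hx.2]

lemma le_arcsin' {x : ℝ} (hx : x ∈ Icc (0:ℝ) 1) : x ≤ arcsin x := by
  have h := Real.sin_le (Real.arcsin_nonneg.2 hx.1)
  rwa [Real.sin_arcsin (by linarith [hx.1]) hx.2] at h

lemma S0_ge {x : ℝ} (hx : x ∈ Icc (0:ℝ) 1) : π/2 ≤ S0 x := by
  unfold S0
  have := hx.1
  have := Real.arcsin_nonneg.2 hx.1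
  have : 0 ≤ x * √(1 - x^2) := by positivity
  linarith
lemma S22_ge {x : ℝ} (hx : x ∈ Icc (0:ℝ) 1) : π/8 ≤ S22 x := by
  unfold S22
  have h0 := hx.1
  have h1 := le_arcsin' hx
  have hu := u_mem hx
  have h2 : √(1 - x^2) ≤ 1 := Real.sqrt_le_one.2 hu.2
  have h3 : x * √(1 - x^2) ≤ x := mul_le_of_le_one_right h0 h2
  have h4 : 0 ≤ x * √(1 - x^2) := by positivity
  nlinarith [mul_nonneg h4 (sq_nonneg x)]
lemma S2_ge {x : ℝ} (hx : x ∈ Icc (0:ℝ) 1) : π/8 ≤ S2 x := by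
  unfold S2
  have h0 := hx.1
  have h1 := Real.arcsin_nonneg.2 hx.1
  have hu := u_mem hx
  have h4 : 0 ≤ x * √(1 - x^2) := by positivity
  nlinarith [mul_nonneg h4 (by linarith : 0 ≤ 5 - 2 * x^2)]

lemma S12_sq {x : ℝ} (hx : x ∈ Icc (0:ℝ) 1) : S12 x ^ 2 = (4/9) * (1-x^2)^3 := by
  have hu := (u_mem hx).1
  unfold S12
  rw [mul_pow, ← Real.rpow_natCast ((1-x^2)^((3:ℝ)/2)) 2, ← Real.rpow_mul hu]
  norm_num
lemma S32_12 {x : ℝ} (hx : x ∈ Icc (0:ℝ) 1) :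
    S32 x * S12 x = (4/45) * (2+3*x^2) * (1-x^2)^3 := by
  have h := S12_sq hx
  unfold S12 at h
  unfold S32 S12
  nlinarith
lemma S3_12 {x : ℝ} (hx : x ∈ Icc (0:ℝ) 1) :
    S3 x * S12 x = (4/45) * (1-x^2)^4 := by
  have hu := (u_mem hx).1
  have : (1-x^2)^((5:ℝ)/2) * (1-x^2)^((3:ℝ)/2) = (1-x^2)^4 := by
    rw [← Real.rpow_add_of_nonneg hu (by norm_num) (by norm_num)]
    norm_num
  unfold S3 S12
  linear_combination (4/45) * this

lemma SD_neg {x : ℝ} (hx : x ∈ Icc (0:ℝ) 1) : SD x ≤ -(1/10) := by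
  unfold SD
  rw [S12_sq hx]
  have hu := u_mem hx
  have h1 : (1-x^2)^3 ≤ 1 := pow_le_one₀ hu.1 hu.2
  have h2 : π/8 * (π/2) ≤ S22 x * S0 x :=
    mul_le_mul (S22_ge hx) (S0_ge hx) (by positivity) (by linarith [S22_ge hx, Real.pi_pos])
  nlinarith [Real.pi_gt_three]

lemma SA_pos {x : ℝ} (hx : x ∈ Icc (0:ℝ) 1) : 0 < SA x := by
  unfold SA
  rw [S3_12 hx]
  have hu := u_mem hx
  have h1 : (1-x^2)^4 ≤ 1 := pow_le_one₀ hu.1 hu.2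
  have h2 : π/8 * (π/8) ≤ S22 x * S2 x :=
    mul_le_mul (S22_ge hx) (S2_ge hx) (by positivity) (by linarith [S22_ge hx, Real.pi_pos])
  nlinarith [Real.pi_gt_three]

lemma S22_mono : MonotoneOn S22 (Icc 0 1) := by
  have hd : ∀ x ∈ Ioo (0:ℝ) 1, HasDerivAt S22 (2 * x^2 * √(1-x^2)) x := by
    intro x hx
    have hu : 0 < 1 - x^2 := by nlinarith [hx.1, hx.2]
    have hs : 0 < √(1-x^2) := Real.sqrt_pos.2 hu
    have hss := Real.sq_sqrt hu.le
    have h1 : HasDerivAt (fun x : ℝ => 1 - x^2) (-(2*x)) x := by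
      simpa using (hasDerivAt_pow 2 x).const_sub 1
    have h2 := h1.sqrt hu.ne'
    have h3 := Real.hasDerivAt_arcsin (x := x) (by linarith [hx.1]) (by linarith [hx.2])
    have h4 : HasDerivAt (fun x : ℝ => 2*x^2 - 1) (4*x) x := by
      have := ((hasDerivAt_pow 2 x).const_mul 2).sub_const 1
      exact this.congr_deriv (by norm_num; try ring)
    have h5 := ((((((hasDerivAt_id x).mul h2).mul h4).add h3).const_mul (1/4)).const_add (π/8))
    refine h5.congr_deriv ?_
    simp only [Pi.mul_apply, id]
    field_simp
    simp only [hss]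
    ring
  apply monotoneOn_of_deriv_nonneg (convex_Icc 0 1) cS22.continuousOn
  · intro x hx
    rw [interior_Icc] at hx
    exact (hd x hx).differentiableAt.differentiableWithinAt
  · intro x hx
    rw [interior_Icc] at hx
    rw [(hd x hx).deriv]
    positivity

lemma SN_diff {x y : ℝ} (hx : x ∈ Icc (0:ℝ) 1) (hy : y ∈ Icc (0:ℝ) 1) (h : x ≤ y) :
    (4/45) * ((2+3*x^2) * (1-x^2)^3 - (2+3*y^2) * (1-y^2)^3) ≤ SN y - SN x := by
  unfold SN
  rw [S32_12 hx, S32_12 hy]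
  have h1 := S22_mono hx hy h
  have h2 := S22_ge hx
  have := pow_le_pow_left₀ (by linarith [Real.pi_pos]) h1 2
  nlinarith

/-- `h(a) - h(b) ≥ (b-a)(1-a)^2(...)`. -/
lemma hpoly {a b : ℝ} (ha : 0 ≤ a) (hab : a < b) (hb : b ≤ 1) :
    0 < (2+3*a) * (1-a)^3 - (2+3*b) * (1-b)^3 := by
  have hd : ∀ x, HasDerivAt (fun x : ℝ => (2+3*x) * (1-x)^3) (-(3 * (1 + 4 * x) * (1-x)^2)) x := by
    intro x
    have h1 : HasDerivAt (fun x : ℝ => 2 + 3*x) 3 x := by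
      simpa using ((hasDerivAt_id x).const_mul 3).const_add 2
    have h2 : HasDerivAt (fun x : ℝ => 1 - x) (-1) x := by
      simpa using (hasDerivAt_id x).const_sub 1
    refine (h1.mul (h2.pow 3)).congr_deriv ?_
    simp; ring
  have hs : StrictAntiOn (fun x : ℝ => (2+3*x) * (1-x)^3) (Icc 0 1) := by
    apply strictAntiOn_of_deriv_neg (convex_Icc 0 1) (by fun_prop)
    intro x hx
    rw [interior_Icc] at hx
    rw [(hd x).deriv]
    have := hx.1
    have : 0 < 1 - x := by linarith [hx.2]
    have : 0 < 3 * (1 + 4 * x) * (1-x)^2 := by positivity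
    linarith
  have := hs ⟨ha, by linarith⟩ ⟨by linarith, hb⟩ hab
  simp only at this
  linarith

lemma hpoly2 {a b : ℝ} (ha : 0 ≤ a) (hab : a ≤ b) (hb : b ≤ 1/9) :
    (b - a) ≤ (2+3*a) * (1-a)^3 - (2+3*b) * (1-b)^3 := by
  have hd : ∀ x, HasDerivAt (fun x : ℝ => (2+3*x) * (1-x)^3 + x) (-(3 * (1 + 4 * x) * (1-x)^2) + 1) x := by
    intro x
    have h1 : HasDerivAt (fun x : ℝ => 2 + 3*x) 3 x := by
      simpa using ((hasDerivAt_id x).const_mul 3).const_add 2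
    have h2 : HasDerivAt (fun x : ℝ => 1 - x) (-1) x := by
      simpa using (hasDerivAt_id x).const_sub 1
    refine ((h1.mul (h2.pow 3)).add (hasDerivAt_id x)).congr_deriv ?_
    simp; ring
  have hs : AntitoneOn (fun x : ℝ => (2+3*x) * (1-x)^3 + x) (Icc 0 (1/9)) := by
    apply antitoneOn_of_deriv_nonpos (convex_Icc 0 _) (by fun_prop) (by fun_prop)
    intro x hx
    rw [interior_Icc] at hx
    rw [(hd x).deriv]
    have := hx.1
    have : 8/9 ≤ 1 - x := by linarith [hx.2]
    have : (8/9)^2 ≤ (1-x)^2 := pow_le_pow_left₀ (by norm_num) this 2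
    nlinarith
  have := hs ⟨ha, by linarith⟩ ⟨by linarith, hb⟩ hab
  simp only at this
  linarith

lemma SN_strict {x y : ℝ} (hx : x ∈ Icc (0:ℝ) 1) (hy : y ∈ Icc (0:ℝ) 1) (h : x < y) :
    SN x < SN y := by
  have h1 := SN_diff hx hy h.le
  have h2 := hpoly (a := x^2) (b := y^2) (sq_nonneg x) (by nlinarith [hx.1]) (by nlinarith [hy.1, hy.2])
  linarith

lemma SN_third : 0 < SN (1/3) := by
  unfold SN
  have hx : (1/3:ℝ) ∈ Icc (0:ℝ) 1 := by constructor <;> norm_num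
  rw [S32_12 hx]
  have h2 := S22_ge hx
  have h3 := pow_le_pow_left₀ (by linarith [Real.pi_pos]) h2 2
  have := Real.pi_gt_d2
  norm_num at *
  nlinarith

lemma SN_lt_third {x : ℝ} (hx : x ∈ Icc (0:ℝ) 1) (h : SN x = 0) : x < 1/3 := by
  by_contra hh
  rcases eq_or_lt_of_le (not_lt.1 hh) with h1 | h1
  · rw [← h1] at h; linarith [SN_third]
  · have := SN_strict (by constructor <;> norm_num) hx h1
    linarith [SN_third]

/-- positivity of the first-order coefficient for `x ≤ 1/3`. -/
lemma SB {x : ℝ} (hx0 : 0 ≤ x) (hx1 : x ≤ 1/3) : (1/2) * SA x + (3/4) * S12 x ≤ -(1/10) := by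
  have hx : x ∈ Icc (0:ℝ) 1 := ⟨hx0, by linarith⟩
  have hu := u_mem hx
  have h1 : S12 x ≤ -(1/2) := by
    have : (1-x^2)^(2:ℝ) ≤ (1 - x^2)^((3:ℝ)/2) := by
      apply Real.rpow_le_rpow_of_exponent_ge (by nlinarith) hu.2 (by norm_num)
    rw [Real.rpow_two] at this
    have h8 : 8/9 ≤ 1 - x^2 := by nlinarith
    unfold S12
    nlinarith
  have ha : arcsin x ≤ π/6 := by
    have : x ≤ sin (π/6) := by rw [Real.sin_pi_div_six]; linarith
    rw [Real.arcsin_le_iff_le_sin ⟨by linarith, by linarith⟩ ⟨by linarith [Real.pi_pos], by linarith [Real.pi_pos]⟩]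
    exact this
  have h4 : 0 ≤ x * √(1 - x^2) := by positivity
  have h5 : x * √(1 - x^2) ≤ 1/3 := by
    have := mul_le_of_le_one_right hx0 (Real.sqrt_le_one.2 hu.2)
    linarith
  have h22 : S22 x ≤ π/6 := by
    unfold S22
    have : x * √(1 - x^2) * (2*x^2-1) ≤ 0 := mul_nonpos_of_nonneg_of_nonpos h4 (by nlinarith)
    linarith
  have h2 : S2 x ≤ π/6 + 5/36 := by
    unfold S2
    have : x * √(1 - x^2) * (5-2*x^2) ≤ 1/3 * 5 := by
      apply mul_le_mul h5 (by nlinarith) (by nlinarith) (by norm_num)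
    linarith
  have hp : S22 x * S2 x ≤ π/6 * (π/6+5/36) :=
    mul_le_mul h22 h2 (by linarith [S2_ge hx, Real.pi_pos]) (by linarith [Real.pi_pos])
  have h3 : 0 ≤ S3 x * S12 x := by rw [S3_12 hx]; have := hu.1; positivity
  unfold SA
  nlinarith [Real.pi_lt_d2, Real.pi_gt_three]

lemma SN_differentiableAt {x : ℝ} (hx : x ∈ Ioo (0:ℝ) 1) : DifferentiableAt ℝ SN x := by
  have hu : 1 - x^2 ≠ 0 := by nlinarith [hx.1, hx.2]
  have h1 : DifferentiableAt ℝ (fun x : ℝ => 1 - x^2) x := by fun_prop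
  have h2 := h1.sqrt hu
  have h3 : DifferentiableAt ℝ arcsin x :=
    Real.differentiableAt_arcsin.2 ⟨by linarith [hx.1], by linarith [hx.2]⟩
  have h4 : DifferentiableAt ℝ (fun x : ℝ => (1 - x^2) ^ ((3:ℝ)/2)) x := h1.rpow_const (Or.inl hu)
  have h22 : DifferentiableAt ℝ S22 x := by unfold S22; fun_prop
  have h12 : DifferentiableAt ℝ S12 x := by unfold S12; fun_prop
  have h32 : DifferentiableAt ℝ S32 x := by unfold S32; fun_prop
  unfold SN
  fun_prop
structure Coef (ε r0 : ℝ) : Prop where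
  e0 : 0 < ε
  e1 : ε ≤ 1/4
  r0pos : 0 < r0
  r0lt : r0 < ε
  ca : ContinuousOn (fun r => phi11 ε (1-r)) (Iic 1)
  cc : ContinuousOn (fun r => phi22 ε (1-r)) (Iic 1)
  ce : ContinuousOn (fun r => phi2d ε (1-r)) (Iic 1)
  aneg : ∀ r, r ≤ 1 → phi11 ε (1-r) < 0
  cneg : ∀ r, r < 1 - r0 → phi22 ε (1-r) < 0
  inner : ∀ r, r ≤ 1 - ε → phi11 ε (1-r) = -(1/8) ∧ phi22 ε (1-r) = -(1/8) ∧ phi2d ε (1-r) = 0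
  near : ∃ ρ b0 C, 1 - ε < ρ ∧ ρ < 1 - r0 ∧ 0 < b0 ∧ 0 < C ∧
    (∀ r ∈ Icc ρ 1, b0 ≤ phi11 ε (1-r) + r * phi2d ε (1-r)) ∧
    (∀ r ∈ Ico ρ (1-r0), -phi22 ε (1-r) ≤ C * (1 - r0 - r))
  right : ∃ k > 0, ∀ r ∈ Ioo (1-r0) 1, k * (r - (1-r0)) ≤ phi22 ε (1-r)

lemma SD_bdd : ∃ M > 0, ∀ x ∈ Icc (0:ℝ) 1, -M ≤ SD x := by
  obtain ⟨M, hM⟩ := isCompact_Icc.exists_bound_of_continuousOn (s := Icc (0:ℝ) 1) cSD.continuousOn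
  refine ⟨max M 1, by positivity, fun x hx => ?_⟩
  have := hM x hx
  rw [Real.norm_eq_abs] at this
  linarith [neg_abs_le (SD x), le_max_left M 1]

lemma coef {ε r0 : ℝ} (e0 : 0 < ε) (e1 : ε ≤ 1/4) (hr : r0 ∈ Ioo 0 ε) (hz : phi22 ε r0 = 0) :
    Coef ε r0 := by
  have hXc : Continuous (fun r : ℝ => XX ε (1-r)) := by unfold XX; fun_prop
  have hm : ∀ r : ℝ, r ≤ 1 → XX ε (1-r) ∈ Icc (0:ℝ) 1 := fun r hr => XX_mem e0 (by linarith)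
  have hD : ∀ r : ℝ, r ≤ 1 → SD (XX ε (1-r)) ≠ 0 := fun r hr => by
    have := SD_neg (hm r hr); linarith
  have hx0 : r0/ε ∈ Ioo (0:ℝ) 1 := ⟨div_pos hr.1 e0, (div_lt_one e0).2 hr.2⟩
  have hx0' := Ioo_subset_Icc_self hx0
  have hN : SN (r0/ε) = 0 := by
    rw [phi22_eq e0 hr.1.le, XX_le e0 hr.2.le] at hz
    have := SD_neg hx0'
    rcases div_eq_zero_iff.1 hz with h | h
    · linarith
    · linarith
  have h3 := SN_lt_third hx0' hN
  refine ⟨e0, e1, hr.1, hr.2, ?_, ?_, ?_, ?_, ?_, ?_, ?_, ?_⟩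
  · refine ContinuousOn.congr (f := fun r => (1/2) * SA (XX ε (1-r)) / SD (XX ε (1-r))) ?_
      (fun r hr => phi11_eq e0 (by linarith [mem_Iic.1 hr]))
    exact ContinuousOn.div ((continuous_const.mul (cSA.comp hXc)).continuousOn)
      (cSD.comp hXc).continuousOn (fun r hr => hD r hr)
  · refine ContinuousOn.congr (f := fun r => (1/2) * SN (XX ε (1-r)) / SD (XX ε (1-r))) ?_
      (fun r hr => phi22_eq e0 (by linarith [mem_Iic.1 hr]))
    exact ContinuousOn.div ((continuous_const.mul (cSN.comp hXc)).continuousOn)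
      (cSD.comp hXc).continuousOn (fun r hr => hD r hr)
  · refine ContinuousOn.congr (f := fun r => S12 (XX ε (1-r)) / SD (XX ε (1-r))) ?_
      (fun r hr => phi2d_eq e0 (by linarith [mem_Iic.1 hr]))
    exact ContinuousOn.div ((cS12.comp hXc).continuousOn)
      (cSD.comp hXc).continuousOn (fun r hr => hD r hr)
  · intro r h
    rw [phi11_eq e0 (by linarith)]
    exact div_neg_of_pos_of_neg (by linarith [SA_pos (hm r h)]) (by linarith [SD_neg (hm r h)])
  · intro r h
    have h1 : r ≤ 1 := by linarith [hr.1]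
    rw [phi22_eq e0 (by linarith)]
    refine div_neg_of_pos_of_neg ?_ (by linarith [SD_neg (hm r h1)])
    have : r0/ε < XX ε (1-r) := lt_min (by gcongr; linarith) hx0.2
    linarith [SN_strict hx0' (hm r h1) this]
  · intro r h
    have h1 : r ≤ 1 := by linarith
    rw [phi11_eq e0 (by linarith), phi22_eq e0 (by linarith), phi2d_eq e0 (by linarith),
      XX_ge e0 (by linarith)]
    have := Real.pi_ne_zero
    refine ⟨?_, ?_, ?_⟩
    · simp [SA, SD, S22, S2, S3, S12, S0]; field_simp; norm_num
    · simp [SN, SD, S22, S2, S32, S12, S0]; field_simp; norm_num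
    · simp [S12]
  · obtain ⟨M, hM0, hM⟩ := SD_bdd
    have hO := (SN_differentiableAt hx0).hasDerivAt.isBigO_sub
    obtain ⟨K, hK⟩ := hO.bound
    rw [Metric.eventually_nhds_iff] at hK
    obtain ⟨δ, hδ, hK⟩ := hK
    have hrε : r0 < ε/3 := by rw [div_lt_iff₀ e0] at h3; linarith
    -- ρ with 1-ρ < ε/3 and (1-ρ)/ε - r0/ε < δ
    set m := min (ε/3 - r0) (δ * ε/2) with hmdef
    have hmpos : 0 < m := lt_min (by linarith) (by positivity)
    have hm1 : m ≤ ε/3 - r0 := min_le_left _ _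
    have hm2 : m ≤ δ*ε/2 := min_le_right _ _
    refine ⟨1 - r0 - m, (1/10)/M, max K 1 * (5/ε), by linarith, by linarith, by positivity, by positivity, ?_, ?_⟩
    · intro r hr'
      have hr1 : r ≤ 1 := hr'.2
      have hr2 : 1 - r0 - m ≤ r := hr'.1
      rw [phi11_eq e0 (by linarith), phi2d_eq e0 (by linarith), XX_le e0 (by linarith)]
      have hx : (1-r)/ε ≤ 1/3 := by rw [div_le_iff₀ e0]; linarith
      have hx' : 0 ≤ (1-r)/ε := div_nonneg (by linarith) e0.le
      have hxm : (1-r)/ε ∈ Icc (0:ℝ) 1 := ⟨hx', by linarith⟩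
      have hb := SB hx' hx
      have hd := SD_neg hxm
      have hdM := hM _ hxm
      have h12 : S12 ((1-r)/ε) ≤ 0 := by
        unfold S12
        have := Real.rpow_nonneg (u_mem hxm).1 ((3:ℝ)/2)
        linarith
      generalize SD ((1-r)/ε) = D at *
      generalize SA ((1-r)/ε) = A at *
      generalize S12 ((1-r)/ε) = T at *
      have hr34 : 3/4 ≤ r := by linarith
      have hnum : 1/2 * A + r * T ≤ -(1/10) := by nlinarith
      have : 1/2 * A / D + r * (T/D) = (-(1/2 * A + r * T)) / (-D) := by
        rw [neg_div_neg_eq]; ring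
      rw [this, div_le_div_iff₀ hM0 (by linarith)]
      nlinarith
    · intro r hr'
      have hr1 : r < 1 - r0 := hr'.2
      have hr2 : 1 - r0 - m ≤ r := hr'.1
      have hr01 : 0 < r0 := hr.1
      rw [phi22_eq e0 (by linarith), XX_le e0 (by linarith)]
      have hxm : (1-r)/ε ∈ Icc (0:ℝ) 1 := ⟨div_nonneg (by linarith) e0.le, by
        rw [div_le_one e0]; linarith⟩
      have hsub : (1-r)/ε - r0/ε = (1-r0-r)/ε := by ring
      have hk := @hK ((1-r)/ε) (by
        rw [Real.dist_eq, hsub, abs_of_nonneg (div_nonneg (by linarith) e0.le), div_lt_iff₀ e0]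
        have : 0 < δ * ε := by positivity
        linarith)
      rw [hN, sub_zero, hsub, Real.norm_eq_abs, Real.norm_eq_abs,
        abs_of_nonneg (div_nonneg (by linarith : 0 ≤ 1-r0-r) e0.le)] at hk
      have hd := SD_neg hxm
      have h4 : SN ((1-r)/ε) ≤ max K 1 * ((1-r0-r)/ε) := by
        refine (le_abs_self _).trans (hk.trans ?_)
        have : 0 ≤ (1-r0-r)/ε := div_nonneg (by linarith) e0.le
        exact mul_le_mul_of_nonneg_right (le_max_left _ _) this
      have h5 : 0 ≤ max K 1 * ((1-r0-r)/ε) :=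
        mul_nonneg (by positivity) (div_nonneg (by linarith) e0.le)
      rw [← div_neg, div_le_iff₀ (by linarith)]
      have : max K 1 * (5/ε) * (1-r0-r) = 5 * (max K 1 * ((1-r0-r)/ε)) := by ring
      rw [this]
      nlinarith
  · obtain ⟨M, hM0, hM⟩ := SD_bdd
    refine ⟨(1/2) * (4/45) * (r0/ε) * (1/ε) / M, by have := hx0.1; positivity, ?_⟩
    intro r hr'
    have hr1 : r < 1 := hr'.2
    have hr2 : 1 - r0 < r := hr'.1
    have hr3 := hr.2
    rw [phi22_eq e0 (by linarith), XX_le e0 (by linarith)]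
    have hxm : (1-r)/ε ∈ Icc (0:ℝ) 1 := ⟨div_nonneg (by linarith) e0.le, by
        rw [div_le_one e0]; linarith⟩
    have hlt : (1-r)/ε ≤ r0/ε := by gcongr; linarith
    have hd := SD_neg hxm
    have hdM := hM _ hxm
    have h1 := SN_diff hxm hx0' hlt
    have h2 := hpoly2 (a := ((1-r)/ε)^2) (b := (r0/ε)^2) (sq_nonneg _)
      (pow_le_pow_left₀ hxm.1 hlt 2) (by nlinarith [hx0.1])
    rw [hN] at h1
    have h3 : (r0/ε) * (r0/ε - (1-r)/ε) ≤ (r0/ε)^2 - ((1-r)/ε)^2 := by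
      nlinarith [mul_nonneg hxm.1 (sub_nonneg.2 hlt)]
    have h4 : (4/45) * ((r0/ε) * (r0/ε - (1-r)/ε)) ≤ - SN ((1-r)/ε) := by linarith
    have h5 : (1/2) * (4/45) * (r0/ε) * (1/ε) / M * (r - (1-r0)) =
      (1/2) * ((4/45) * ((r0/ε) * (r0/ε - (1-r)/ε))) / M := by ring
    have h6 : 1/2 * SN ((1-r)/ε) / SD ((1-r)/ε) = (1/2 * (-SN ((1-r)/ε))) / (-SD ((1-r)/ε)) := by
      rw [← neg_div_neg_eq]; ring
    rw [h5, h6]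
    have h7 : 0 ≤ (4/45) * ((r0/ε) * (r0/ε - (1-r)/ε)) := by
      have := hx0.1
      have := sub_nonneg.2 hlt
      positivity
    apply div_le_div₀ (by linarith) (by linarith) (by linarith) (by linarith)
noncomputable def BB (ε s : ℝ) : ℝ := (phi11 ε (1-s) + s * phi2d ε (1-s)) / (s * phi22 ε (1-s))

namespace Coef
variable {ε r0 : ℝ}

lemma pos1 (hc : Coef ε r0) : 0 < 1 - ε := by linarith [hc.e1]
lemma lt1 (hc : Coef ε r0) : 1 - ε < 1 - r0 := by linarith [hc.r0lt]
lemma pos2 (hc : Coef ε r0) : 0 < 1 - r0 := by linarith [hc.pos1, hc.lt1]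
lemma lt2 (hc : Coef ε r0) : 1 - r0 < 1 := by linarith [hc.r0pos]

lemma cB (hc : Coef ε r0) : ContinuousOn (BB ε) (Ioo 0 (1-r0)) := by
  have hs : Ioo 0 (1-r0) ⊆ Iic (1:ℝ) := fun r hr => by
    have := hr.2; have := hc.lt2; simp; linarith
  unfold BB
  refine ContinuousOn.div ((hc.ca.mono hs).add (continuousOn_id.mul (hc.ce.mono hs)))
    (continuousOn_id.mul (hc.cc.mono hs)) ?_
  intro r hr
  exact mul_ne_zero hr.1.ne' (hc.cneg r hr.2).ne

lemma hI (hc : Coef ε r0) {r : ℝ} (hr : r ∈ Ioo 0 (1-r0)) :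
    HasDerivAt (fun r => ∫ s in (1-ε)..r, BB ε s) (BB ε r) r := by
  apply intervalIntegral.integral_hasDerivAt_right
  · apply ContinuousOn.intervalIntegrable
    apply hc.cB.mono
    have : OrdConnected (Ioo (0:ℝ) (1-r0)) := inferInstance
    exact this.uIcc_subset ⟨hc.pos1, hc.lt1⟩ hr
  · exact hc.cB.stronglyMeasurableAtFilter isOpen_Ioo r hr
  · exact hc.cB.continuousAt (isOpen_Ioo.mem_nhds hr)

lemma pd_eq (_hc : Coef ε r0) {r : ℝ} (hr : r < 1 - r0) :
    pd ε r0 r = (1/8) * (1-ε) * Real.exp (∫ s in (1-ε)..r, BB ε s) := by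
  unfold pd BB
  rw [Real.sign_of_pos (by linarith), mul_one]

lemma pd_pos (hc : Coef ε r0) {r : ℝ} (hr : r < 1 - r0) : 0 < pd ε r0 r := by
  rw [hc.pd_eq hr]
  have := hc.pos1
  positivity

lemma pd_end : pd ε r0 (1-r0) = 0 := by simp [pd]

lemma pd_deriv (hc : Coef ε r0) {r : ℝ} (hr : r ∈ Ioo 0 (1-r0)) :
    HasDerivAt (pd ε r0) (pd ε r0 r * BB ε r) r := by
  have h := ((hc.hI hr).exp).const_mul ((1/8) * (1-ε))
  have he : pd ε r0 =ᶠ[𝓝 r] fun r => (1/8) * (1-ε) * Real.exp (∫ s in (1-ε)..r, BB ε s) := by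
    filter_upwards [Iio_mem_nhds hr.2] with x hx using hc.pd_eq hx
  refine (h.congr_of_eventuallyEq he).congr_deriv ?_
  rw [hc.pd_eq hr.2]; ring

lemma pd_inner (hc : Coef ε r0) {r : ℝ} (h0 : 0 < r) (h1 : r ≤ 1 - ε) : pd ε r0 r = r/8 := by
  have hp := hc.pos1
  rw [hc.pd_eq (by linarith [hc.lt1])]
  have : ∫ s in (1-ε)..r, BB ε s = ∫ s in (1-ε)..r, s⁻¹ := by
    apply intervalIntegral.integral_congr
    intro s hs
    rw [uIcc_of_ge h1] at hs
    obtain ⟨h1, h2, h3⟩ := hc.inner s hs.2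
    have : s ≠ 0 := by linarith [hs.1]
    simp only [BB, h1, h2, h3]
    field_simp
    norm_num
  rw [this, integral_inv_of_pos hp h0, Real.exp_log (by positivity)]
  field_simp

lemma pd_tendsto_end (hc : Coef ε r0) : Tendsto (pd ε r0) (𝓝[<] (1-r0)) (𝓝 0) := by
  obtain ⟨ρ, b0, C, h1, h2, hb, hC, hB, hcc⟩ := hc.near
  have hp := hc.pos1
  set α := b0 / C with hα
  have hα0 : 0 < α := by positivity
  set f := fun r => (∫ s in (1-ε)..r, BB ε s) - α * Real.log (1 - r0 - r) with hf
  have hd : ∀ r ∈ Ico ρ (1-r0), HasDerivAt f (BB ε r + α / (1-r0-r)) r := by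
    intro r hr
    have h3 : HasDerivAt (fun r : ℝ => 1 - r0 - r) (-1) r := by
      simpa using (hasDerivAt_id r).const_sub (1-r0)
    have h4 := (h3.log (by linarith [hr.2])).const_mul α
    refine ((hc.hI ⟨by linarith [hr.1], hr.2⟩).sub h4).congr_deriv ?_
    ring
  have hanti : AntitoneOn f (Ico ρ (1-r0)) := by
    apply antitoneOn_of_deriv_nonpos (convex_Ico _ _)
    · intro r hr; exact (hd r hr).continuousAt.continuousWithinAt
    · intro r hr; exact (hd r (interior_subset hr)).differentiableAt.differentiableWithinAt
    · intro r hr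
      have hr := interior_subset hr
      rw [(hd r hr).deriv]
      have hpos : 0 < 1 - r0 - r := by linarith [hr.2]
      have hr0 : 0 < r := by linarith [hr.1]
      have hr1 : r ≤ 1 := by linarith [hr.2, hc.lt2]
      have ha := hB r ⟨hr.1, hr1⟩
      have hc1 := hcc r hr
      have hc2 := hc.cneg r hr.2
      have : BB ε r = - ((phi11 ε (1-r) + r * phi2d ε (1-r)) / (r * (-phi22 ε (1-r)))) := by
        unfold BB
        rw [mul_neg, div_neg, neg_neg]
      rw [this]
      have h5 : α / (1-r0-r) = b0 / (C * (1-r0-r)) := by rw [hα, div_div]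
      rw [h5]
      have h6 : r * (-phi22 ε (1-r)) ≤ C * (1-r0-r) := by nlinarith
      have h7 : 0 < r * (-phi22 ε (1-r)) := by apply mul_pos hr0; linarith
      have := div_le_div₀ (by linarith) ha h7 h6
      linarith
  set K := (1/8) * (1-ε) * Real.exp (f ρ) with hK
  have hle : ∀ r ∈ Ico ρ (1-r0), pd ε r0 r ≤ K * (1-r0-r)^α := by
    intro r hr
    have hpos : 0 < 1 - r0 - r := by linarith [hr.2]
    have h3 := hanti ⟨le_refl ρ, h2⟩ hr hr.1
    rw [hc.pd_eq hr.2, hK, Real.rpow_def_of_pos hpos, mul_assoc ((1/8) * (1-ε)), ← Real.exp_add]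
    apply mul_le_mul_of_nonneg_left _ (by positivity)
    apply Real.exp_le_exp.2
    have : f r = (∫ s in (1-ε)..r, BB ε s) - α * Real.log (1 - r0 - r) := rfl
    linarith
  have hlim : Tendsto (fun r : ℝ => K * (1-r0-r)^α) (𝓝[<] (1-r0)) (𝓝 0) := by
    have hcont : Continuous (fun r : ℝ => K * (1-r0-r)^α) :=
      continuous_const.mul (Continuous.rpow_const (by fun_prop) (fun _ => Or.inr hα0.le))
    have := (hcont.tendsto (1-r0)).mono_left (nhdsWithin_le_nhds (s := Iio (1-r0)))
    simpa [Real.zero_rpow hα0.ne'] using this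
  have hmem : Ico ρ (1-r0) ∈ 𝓝[<] (1-r0) := Ico_mem_nhdsLT h2
  refine tendsto_of_tendsto_of_tendsto_of_le_of_le' tendsto_const_nhds hlim ?_ ?_
  · filter_upwards [hmem] with r hr using (hc.pd_pos hr.2).le
  · filter_upwards [hmem] with r hr using hle r hr

lemma pd_tendsto_zero (hc : Coef ε r0) : Tendsto (pd ε r0) (𝓝[>] 0) (𝓝 0) := by
  have h : Tendsto (fun r : ℝ => r/8) (𝓝[>] 0) (𝓝 0) := by
    have : Continuous (fun r : ℝ => r/8) := by fun_prop
    simpa using (this.tendsto 0).mono_left (nhdsWithin_le_nhds (s := Ioi 0))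
  refine h.congr' ?_
  filter_upwards [Ioc_mem_nhdsGT hc.pos1] with r hr using (hc.pd_inner hr.1 hr.2).symm

lemma pd_cont (hc : Coef ε r0) : ContinuousOn (pd ε r0) (Ioc 0 (1-r0)) := by
  intro r hr
  rcases eq_or_lt_of_le hr.2 with h | h
  · subst h
    have : ContinuousWithinAt (pd ε r0) (Iio (1-r0)) (1-r0) := by
      rw [ContinuousWithinAt, pd_end]; exact hc.pd_tendsto_end
    have h2 := (continuousWithinAt_insert_self (x := 1-r0) (s := Iio (1-r0))).2 this
    rw [Iio_insert] at h2
    exact h2.mono (fun x hx => hx.2)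
  · exact (hc.pd_deriv ⟨hr.1, h⟩).continuousAt.continuousWithinAt

lemma pd_int (hc : Coef ε r0) : IntervalIntegrable (pd ε r0) volume 0 (1-r0) := by
  apply IntervalIntegrable.trans (b := 1-ε)
  · have : IntervalIntegrable (fun r : ℝ => r/8) volume 0 (1-ε) :=
      (by fun_prop : Continuous (fun r : ℝ => r/8)).intervalIntegrable _ _
    refine this.congr ?_
    intro r hr
    rw [uIoc_of_le hc.pos1.le] at hr
    exact (hc.pd_inner hr.1 hr.2).symm
  · apply ContinuousOn.intervalIntegrable
    rw [uIcc_of_le hc.lt1.le]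
    exact hc.pd_cont.mono (fun r hr => ⟨by linarith [hr.1, hc.pos1], hr.2⟩)

lemma wd_pos (hc : Coef ε r0) {r : ℝ} (hr : r < 1 - r0) : 0 < wd ε r0 r := by
  unfold wd
  exact div_pos_of_neg_of_neg (by linarith [hc.pd_pos hr]) (hc.cneg r hr)

lemma wd_cont (hc : Coef ε r0) : ContinuousOn (wd ε r0) (Ioo 0 (1-r0)) := by
  unfold wd
  refine ContinuousOn.div (hc.pd_cont.mono Ioo_subset_Ioc_self).neg (hc.cc.mono ?_) ?_
  · intro r hr
    have := hr.2; have := hc.lt2; simp; linarith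
  · intro r hr; exact (hc.cneg r hr.2).ne

lemma wd_int (hc : Coef ε r0) : IntervalIntegrable (wd ε r0) volume 0 (1-r0) := by
  obtain ⟨ρ, b0, C, h1, h2, hb, hC, hB, hcc⟩ := hc.near
  have hp := hc.pos1
  have i1 : IntervalIntegrable (wd ε r0) volume 0 (1-ε) := by
    have : IntervalIntegrable (fun r : ℝ => r) volume 0 (1-ε) :=
      continuous_id.intervalIntegrable _ _
    refine this.congr ?_
    intro r hr
    rw [uIoc_of_le hc.pos1.le] at hr
    simp only [wd, hc.pd_inner hr.1 hr.2, (hc.inner r hr.2).2.1]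
    field_simp
  have i2 : IntervalIntegrable (wd ε r0) volume (1-ε) ρ := by
    apply ContinuousOn.intervalIntegrable
    rw [uIcc_of_le h1.le]
    exact hc.wd_cont.mono (fun r hr => ⟨by linarith [hr.1], by linarith [hr.2]⟩)
  have i3 : IntervalIntegrable (wd ε r0) volume ρ (1-r0) := by
    have hg : ∀ r ∈ Ioo ρ (1-r0), b0 * wd ε r0 r ≤ -(pd ε r0 r * BB ε r) := by
      intro r hr
      have hr0 : 0 < r := by linarith [hr.1]
      have hr1 : r ≤ 1 := by linarith [hr.2, hc.lt2]
      have hw := hc.wd_pos hr.2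
      have hn := hc.cneg r hr.2
      have : -(pd ε r0 r * BB ε r) = wd ε r0 r * ((phi11 ε (1-r) + r * phi2d ε (1-r)) / r) := by
        unfold wd BB; field_simp
      rw [this, mul_comm]
      apply mul_le_mul_of_nonneg_left _ hw.le
      rw [le_div_iff₀ hr0]
      have := hB r ⟨hr.1.le, hr1⟩
      nlinarith
    have key := intervalIntegral.integrableOn_deriv_of_nonneg (g := fun r => -pd ε r0 r)
      (g' := fun r => -(pd ε r0 r * BB ε r)) (a := ρ) (b := 1-r0)
      (hc.pd_cont.neg.mono (fun r hr => ⟨by linarith [hr.1], hr.2⟩))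
      (fun r hr => (hc.pd_deriv ⟨by linarith [hr.1], hr.2⟩).neg)
      (fun r hr => le_trans (mul_nonneg hb.le (hc.wd_pos hr.2).le) (hg r hr))
    rw [intervalIntegrable_iff_integrableOn_Ioc_of_le h2.le, integrableOn_Ioc_iff_integrableOn_Ioo]
    rw [integrableOn_Ioc_iff_integrableOn_Ioo] at key
    have key2 := key.const_mul (1/b0)
    refine Integrable.mono' key2 ?_ ?_
    · exact (hc.wd_cont.mono (fun r hr => ⟨by linarith [hr.1], hr.2⟩)).aestronglyMeasurable measurableSet_Ioo
    · rw [ae_restrict_iff' measurableSet_Ioo]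
      refine Eventually.of_forall (fun r hr => ?_)
      rw [Real.norm_eq_abs, abs_of_pos (hc.wd_pos hr.2)]
      have := hg r hr
      rw [one_div, ← div_eq_inv_mul, le_div_iff₀ hb]
      linarith
  exact (i1.trans i2).trans i3

lemma ftc (hc : Coef ε r0) {A A' H : ℝ → ℝ} {M : ℝ}
    (hA : ∀ r ∈ Ioo 0 (1-r0), HasDerivAt A (A' r) r)
    (hM : ∀ r ∈ Ioo 0 (1-r0), |A r| ≤ M)
    (hH : IntervalIntegrable H volume 0 (1-r0))
    (hE : ∀ r ∈ Ioo 0 (1-r0), H r = pd ε r0 r * A' r + pd ε r0 r * BB ε r * A r) :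
    ∫ r in (0:ℝ)..(1-r0), H r = 0 := by
  have hb : ∀ l : Filter ℝ, Ioo 0 (1-r0) ∈ l → Tendsto (pd ε r0) l (𝓝 0) →
      Tendsto (fun r => pd ε r0 r * A r) l (𝓝 0) := by
    intro l hl ht
    refine Filter.Tendsto.zero_mul_isBoundedUnder_le ht ⟨M, ?_⟩
    rw [eventually_map]
    filter_upwards [hl] with r hr
    simpa using hM r hr
  have := intervalIntegral.integral_eq_sub_of_hasDerivAt_of_tendsto hc.pos2
    (f := fun r => pd ε r0 r * A r) (f' := H) (fa := 0) (fb := 0) ?_ hH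
    (hb _ (Ioo_mem_nhdsGT hc.pos2) hc.pd_tendsto_zero) (hb _ (Ioo_mem_nhdsLT hc.pos2) hc.pd_tendsto_end)
  · simpa using this
  · intro r hr
    refine ((hc.pd_deriv hr).mul (hA r hr)).congr_deriv ?_
    rw [hE r hr]; ring

end Coef
lemma posint {a b c : ℝ} {f : ℝ → ℝ} (hf : IntervalIntegrable f volume a b)
    (h0 : ∀ r ∈ Ioo a b, 0 ≤ f r) (hcont : ContinuousOn f (Ioo a b)) (hc : c ∈ Ioo a b)
    (hpos : 0 < f c) : 0 < ∫ r in a..b, f r := by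
  have h1 : ∀ᶠ x in 𝓝 c, 0 < f x ∧ x ∈ Ioo a b :=
    ((hcont.continuousAt (isOpen_Ioo.mem_nhds hc)).eventually (lt_mem_nhds hpos)).and
      (isOpen_Ioo.mem_nhds hc)
  obtain ⟨δ, hδ, hh⟩ := Metric.eventually_nhds_iff.1 h1
  have hin : ∀ x ∈ Icc (c - δ/2) (c+δ/2), 0 < f x ∧ x ∈ Ioo a b := by
    intro x hx
    apply hh
    rw [Real.dist_eq, abs_lt]
    constructor <;> linarith [hx.1, hx.2]
  have ha := (hin (c-δ/2) ⟨le_refl _, by linarith⟩).2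
  have hb := (hin (c+δ/2) ⟨by linarith, le_refl _⟩).2
  have hab : a < b := hc.1.trans hc.2
  have h2 : 0 < ∫ r in (c-δ/2)..(c+δ/2), f r := by
    apply intervalIntegral.intervalIntegral_pos_of_pos_on
    · apply ContinuousOn.intervalIntegrable
      rw [uIcc_of_le (by linarith)]
      exact hcont.mono (fun x hx => (hin x hx).2)
    · intro x hx; exact (hin x ⟨hx.1.le, hx.2.le⟩).1
    · linarith
  refine h2.trans_le ?_
  apply intervalIntegral.integral_mono_interval ha.1.le (by linarith) hb.2.le _ hf
  rw [Filter.EventuallyLE, ← restrict_Ioo_eq_restrict_Ioc, ae_restrict_iff' measurableSet_Ioo]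
  exact Eventually.of_forall (fun x hx => h0 x hx)

structure RadSol (ε lam : ℝ) (ν : ℕ) (v v' v'' : ℝ → ℝ) : Prop where
  d1 : ∀ r ∈ Ioo (-1:ℝ) 1, HasDerivAt v (v' r) r
  d2 : ∀ r ∈ Ioo (-1:ℝ) 1, HasDerivAt v' (v'' r) r
  ode : ∀ r ∈ Ioo (0:ℝ) 1, phi11 ε (1-r) * ((1/r) * v' r + (1/r^2) * (-(ν:ℝ)^2 * v r)) +
      phi22 ε (1-r) * v'' r + phi2d ε (1-r) * v' r = lam * v r
  z : ν ≠ 0 → v 0 = 0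

namespace RadSol
variable {ε r0 lam : ℝ} {ν : ℕ} {v v' v'' : ℝ → ℝ}

lemma cv (h : RadSol ε lam ν v v' v'') : ContinuousOn v (Ioo (-1) 1) :=
  fun r hr => (h.d1 r hr).continuousAt.continuousWithinAt
lemma cv' (h : RadSol ε lam ν v v' v'') : ContinuousOn v' (Ioo (-1) 1) :=
  fun r hr => (h.d2 r hr).continuousAt.continuousWithinAt

lemma qd_eq (r : ℝ) : qd ε r0 r = wd ε r0 r * (phi11 ε (1-r) / r^2) := by
  unfold qd wd; ring

lemma sub (hc : Coef ε r0) : Icc 0 (1-r0) ⊆ Ioo (-1:ℝ) 1 := fun r hr =>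
  ⟨by linarith [hr.1], by linarith [hr.2, hc.lt2]⟩

lemma int_p (hc : Coef ε r0) (h : RadSol ε lam ν v v' v'') :
    IntervalIntegrable (fun r => pd ε r0 r * (v' r)^2) volume 0 (1-r0) := by
  apply hc.pd_int.mul_continuousOn
  rw [uIcc_of_le hc.pos2.le]
  exact (h.cv'.mono (sub hc)).pow 2

lemma int_w (hc : Coef ε r0) (h : RadSol ε lam ν v v' v'') :
    IntervalIntegrable (fun r => wd ε r0 r * (v r)^2) volume 0 (1-r0) := by
  apply hc.wd_int.mul_continuousOn
  rw [uIcc_of_le hc.pos2.le]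
  exact (h.cv.mono (sub hc)).pow 2

lemma int_q (hc : Coef ε r0) (h : RadSol ε lam ν v v' v'') :
    IntervalIntegrable (fun r => (ν:ℝ)^2 * (qd ε r0 r * (v r)^2)) volume 0 (1-r0) := by
  by_cases hν : ν = 0
  · simp [hν]
  have hs : Ioo (-1:ℝ) 1 ∈ 𝓝 (0:ℝ) := Ioo_mem_nhds (by norm_num) (by norm_num)
  have hds : ContinuousOn (dslope v 0) (Ioo (-1) 1) :=
    (continuousOn_dslope hs).2 ⟨h.cv, (h.d1 0 (by constructor <;> norm_num)).differentiableAt⟩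
  have h1 : IntervalIntegrable (fun r => wd ε r0 r * (phi11 ε (1-r) * (dslope v 0 r)^2)) volume 0 (1-r0) := by
    apply hc.wd_int.mul_continuousOn
    rw [uIcc_of_le hc.pos2.le]
    exact (hc.ca.mono (fun r hr => by simp; linarith [hr.2, hc.lt2])).mul ((hds.mono (sub hc)).pow 2)
  refine (h1.const_mul ((ν:ℝ)^2)).congr ?_
  intro r hr
  rw [uIoc_of_le hc.pos2.le] at hr
  have hr0 : r ≠ 0 := hr.1.ne'
  simp only
  rw [dslope_of_ne _ hr0, slope_def_field, h.z hν, qd_eq]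
  simp only [sub_zero]
  field_simp

lemma energy (hc : Coef ε r0) (h : RadSol ε lam ν v v' v'') :
    (∫ r in (0:ℝ)..(1 - r0), pd ε r0 r * (v' r)^2) -
      (ν:ℝ)^2 * (∫ r in (0:ℝ)..(1 - r0), qd ε r0 r * (v r)^2) =
    lam * ∫ r in (0:ℝ)..(1 - r0), wd ε r0 r * (v r)^2 := by
  obtain ⟨M, hM⟩ := isCompact_Icc.exists_bound_of_continuousOn (s := Icc (0:ℝ) (1-r0))
    ((h.cv.mul h.cv').mono (sub hc))
  have hi := ((h.int_p hc).sub (h.int_q hc)).sub ((h.int_w hc).const_mul lam)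
  have key := hc.ftc (A := fun r => v r * v' r) (A' := fun r => v' r * v' r + v r * v'' r)
    (H := fun r => pd ε r0 r * (v' r)^2 - (ν:ℝ)^2 * (qd ε r0 r * (v r)^2)
      - lam * (wd ε r0 r * (v r)^2)) (M := M)
    (fun r hr => (h.d1 r (sub hc (Ioo_subset_Icc_self hr))).mul (h.d2 r (sub hc (Ioo_subset_Icc_self hr))))
    (fun r hr => hM r (Ioo_subset_Icc_self hr)) hi ?_
  · rw [intervalIntegral.integral_sub ((h.int_p hc).sub (h.int_q hc)) ((h.int_w hc).const_mul lam),
      intervalIntegral.integral_sub (h.int_p hc) (h.int_q hc),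
      intervalIntegral.integral_const_mul, intervalIntegral.integral_const_mul] at key
    linarith
  · intro r hr
    have hode := h.ode r ⟨hr.1, by linarith [hr.2, hc.lt2]⟩
    have hn := (hc.cneg r hr.2).ne
    have hr0 : r ≠ 0 := hr.1.ne'
    unfold qd wd BB
    generalize phi22 ε (1-r) = c at *
    generalize phi11 ε (1-r) = a at *
    generalize phi2d ε (1-r) = e at *
    generalize pd ε r0 r = p at *
    have : v'' r = (lam * v r - a * ((1/r) * v' r + (1/r^2) * (-(ν:ℝ)^2 * v r)) - e * v' r)/c := by
      field_simp at hode ⊢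
      linarith
    rw [this]
    field_simp
    ring

lemma q_nonpos (hc : Coef ε r0) : (∫ r in (0:ℝ)..(1 - r0), qd ε r0 r * (v r)^2) ≤ 0 := by
  have : 0 ≤ ∫ r in (0:ℝ)..(1 - r0), -(qd ε r0 r * (v r)^2) := by
    rw [intervalIntegral.integral_of_le hc.pos2.le, integral_Ioc_eq_integral_Ioo]
    apply setIntegral_nonneg measurableSet_Ioo
    intro r hr
    rw [qd_eq]
    have h1 := hc.wd_pos hr.2
    have h2 := hc.aneg r (by linarith [hr.2, hc.lt2])
    have h3 : phi11 ε (1-r) / r^2 ≤ 0 := div_nonpos_of_nonpos_of_nonneg h2.le (sq_nonneg _)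
    have h4 := mul_nonpos_of_nonneg_of_nonpos h1.le h3
    have := mul_nonpos_of_nonpos_of_nonneg h4 (sq_nonneg (v r))
    linarith
  rw [intervalIntegral.integral_neg] at this
  linarith

lemma p_nonneg (hc : Coef ε r0) : 0 ≤ (∫ r in (0:ℝ)..(1 - r0), pd ε r0 r * (v' r)^2) := by
  rw [intervalIntegral.integral_of_le hc.pos2.le, integral_Ioc_eq_integral_Ioo]
  apply setIntegral_nonneg measurableSet_Ioo
  intro r hr
  have h1 := hc.pd_pos hr.2
  positivity

set_option maxHeartbeats 1000000 in
lemma uniq (hc : Coef ε r0) (h : RadSol ε lam ν v v' v'')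
    (hz : ∀ r ∈ Ioo 0 (1-r0), v r = 0) : ∀ r ∈ Ioo (0:ℝ) 1, v r = 0 := by
  have hp2 := hc.pos2
  have hl2 := hc.lt2
  have hmem : (1-r0) ∈ Ioo (-1:ℝ) 1 := ⟨by linarith, hl2⟩
  have hd0 : ∀ r ∈ Ioo 0 (1-r0), v' r = 0 := by
    intro r hr
    have h1 := h.d1 r (sub hc (Ioo_subset_Icc_self hr))
    have h2 : HasDerivAt v 0 r := by
      refine (hasDerivAt_const r (0:ℝ)).congr_of_eventuallyEq ?_
      filter_upwards [isOpen_Ioo.mem_nhds hr] with x hx using hz x hx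
    exact h1.unique h2
  have hlim0 : ∀ f : ℝ → ℝ, ContinuousAt f (1-r0) → (∀ r ∈ Ioo 0 (1-r0), f r = 0) → f (1-r0) = 0 := by
    intro f hf h0
    have h1 : Tendsto f (𝓝[<] (1-r0)) (𝓝 (f (1-r0))) := hf.tendsto.mono_left nhdsWithin_le_nhds
    have h2 : Tendsto f (𝓝[<] (1-r0)) (𝓝 0) := by
      refine tendsto_const_nhds.congr' ?_
      filter_upwards [Ioo_mem_nhdsLT hp2] with x hx using (h0 x hx).symm
    exact tendsto_nhds_unique h1 h2
  have hv1 := hlim0 v (h.d1 _ hmem).continuousAt hz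
  have hv1' := hlim0 v' (h.d2 _ hmem).continuousAt hd0
  obtain ⟨ρ, b0, C, h1, h2, hb, hC, hB, -⟩ := hc.near
  obtain ⟨k, hk, hkk⟩ := hc.right
  obtain ⟨K0, hK0⟩ := isCompact_Icc.exists_bound_of_continuousOn (s := Icc (1-r0) (1:ℝ))
    (f := fun r => phi11 ε (1-r) * (ν:ℝ)^2 / r^2 + lam) (by
      refine ContinuousOn.add (ContinuousOn.div ((hc.ca.mono fun r hr => hr.2).mul continuousOn_const)
        (by fun_prop) ?_) continuousOn_const
      intro r hr
      have : 0 < r := by linarith [hr.1]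
      positivity)
  set K := max K0 0
  set L := K^2/(2*b0*k) + 1 with hL
  have hK : 0 ≤ K := le_max_right _ _
  have hL0 : 0 ≤ K^2/(2*b0*k) := by positivity
  set E := fun r => (v' r)^2 + (v r)^2/(r-(1-r0)) with hE
  have hEd : ∀ r ∈ Ioo (1-r0) 1, HasDerivAt E (2 * v' r * v'' r +
      (2 * v r * v' r * (r-(1-r0)) - (v r)^2)/(r-(1-r0))^2) r := by
    intro r hr
    have hr' : r ∈ Ioo (-1:ℝ) 1 := ⟨by linarith [hr.1], hr.2⟩
    have hx : r - (1-r0) ≠ 0 := by linarith [hr.1]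
    have h3 : HasDerivAt (fun r : ℝ => r - (1-r0)) 1 r := (hasDerivAt_id r).sub_const _
    refine (((h.d2 r hr').pow 2).add (((h.d1 r hr').pow 2).div h3 hx)).congr_deriv ?_
    simp
  have hEle : ∀ r ∈ Ioo (1-r0) 1, 2 * v' r * v'' r +
      (2 * v r * v' r * (r-(1-r0)) - (v r)^2)/(r-(1-r0))^2 ≤ L * E r := by
    intro r hr
    have hx : 0 < r - (1-r0) := by linarith [hr.1]
    have hr0 : 0 < r := by linarith [hr.1]
    have hode := h.ode r ⟨hr0, hr.2⟩
    have hbb := hB r ⟨by linarith [hr.1], hr.2.le⟩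
    have hkr := hkk r hr
    have hg := hK0 r ⟨hr.1.le, hr.2.le⟩
    rw [Real.norm_eq_abs] at hg
    have hr1 := hr.2
    set g := phi11 ε (1-r) * (ν:ℝ)^2 / r^2 + lam with hgdef
    set b := phi11 ε (1-r) / r + phi2d ε (1-r) with hbdef
    set c := phi22 ε (1-r)
    set x := r - (1-r0) with hxdef
    have hc0 : 0 < c := lt_of_lt_of_le (by positivity) hkr
    have hb0 : b0 ≤ b := by
      have : b = (phi11 ε (1-r) + r * phi2d ε (1-r))/r := by rw [hbdef]; field_simp
      rw [this, le_div_iff₀ hr0]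
      nlinarith
    have hg2 : g^2 ≤ K^2 := by
      rw [← sq_abs g]
      exact pow_le_pow_left₀ (abs_nonneg _) (hg.trans (le_max_left _ _)) 2
    have hode2 : c * v'' r = g * v r - b * v' r := by
      rw [hgdef, hbdef]
      field_simp at hode ⊢
      linarith
    have hb1 : 0 < b := by linarith
    have e1 : 2 * v' r * v'' r ≤ K^2/(2*b0*k) * (v r)^2 / x := by
      have e2 : 2 * v' r * v'' r = 2 * (v' r * (g * v r - b * v' r)) / c := by
        rw [← hode2]; field_simp
      have e3 : 2 * (v' r * (g * v r - b * v' r)) ≤ g^2 * (v r)^2 / (2 * b) := by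
        rw [le_div_iff₀ (by positivity)]
        nlinarith [sq_nonneg (g * v r - 2 * b * v' r)]
      have e4 : g^2 * (v r)^2 / (2 * b) ≤ K^2 * (v r)^2 / (2 * b0) := by
        gcongr
      have e5 : K^2 * (v r)^2 / (2 * b0) / c ≤ K^2 * (v r)^2 / (2 * b0) / (k * x) := by
        gcongr
      have e6 : K^2 * (v r)^2 / (2 * b0) / (k * x) = K^2/(2*b0*k) * (v r)^2 / x := by
        field_simp
      rw [e2, ← e6]
      refine le_trans ?_ e5
      gcongr
      exact e3.trans e4
    have e7 : (2 * v r * v' r * x - (v r)^2)/x^2 ≤ (v' r)^2 := by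
      rw [div_le_iff₀ (by positivity)]
      nlinarith [sq_nonneg (v r - v' r * x)]
    have e8 : E r = (v' r)^2 + (v r)^2/x := rfl
    have e9 : 0 ≤ (v r)^2/x := by positivity
    have e10 : K^2/(2*b0*k) * (v r)^2 / x = K^2/(2*b0*k) * ((v r)^2 / x) := by ring
    rw [e8, hL]
    rw [e10] at e1
    have e11 := mul_nonneg hL0 (sq_nonneg (v' r))
    have e12 : ∀ Q V W : ℝ, (Q+1)*(V+W) = Q*V+Q*W+V+W := fun Q V W => by ring
    rw [e12]
    linarith
  set G := fun r => E r * Real.exp (-L * r) with hG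
  have hGd : ∀ r ∈ Ioo (1-r0) 1, HasDerivAt G ((2 * v' r * v'' r +
      (2 * v r * v' r * (r-(1-r0)) - (v r)^2)/(r-(1-r0))^2 - L * E r) * Real.exp (-L * r)) r := by
    intro r hr
    have h3 : HasDerivAt (fun r : ℝ => -L * r) (-L) r := by
      simpa using (hasDerivAt_id r).const_mul (-L)
    refine ((hEd r hr).mul h3.exp).congr_deriv ?_
    ring
  have hanti : AntitoneOn G (Ioo (1-r0) 1) := by
    apply antitoneOn_of_deriv_nonpos (convex_Ioo _ _)
    · intro r hr; exact (hGd r hr).continuousAt.continuousWithinAt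
    · intro r hr; exact (hGd r (interior_subset hr)).differentiableAt.differentiableWithinAt
    · intro r hr
      have hr := interior_subset hr
      rw [(hGd r hr).deriv]
      exact mul_nonpos_of_nonpos_of_nonneg (by linarith [hEle r hr]) (Real.exp_pos _).le
  have hlim : Tendsto G (𝓝[>] (1-r0)) (𝓝 0) := by
    have t1 : Tendsto v (𝓝[>] (1-r0)) (𝓝 0) := by
      have := (h.d1 _ hmem).continuousAt.tendsto.mono_left (nhdsWithin_le_nhds (s := Ioi (1-r0)))
      rwa [hv1] at this
    have t2 : Tendsto v' (𝓝[>] (1-r0)) (𝓝 0) := by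
      have := (h.d2 _ hmem).continuousAt.tendsto.mono_left (nhdsWithin_le_nhds (s := Ioi (1-r0)))
      rwa [hv1'] at this
    have t3 : Tendsto (slope v (1-r0)) (𝓝[>] (1-r0)) (𝓝 0) := by
      have := (hasDerivAt_iff_tendsto_slope.1 (h.d1 _ hmem)).mono_left
        (nhdsWithin_mono _ (fun x (hx : x ∈ Ioi (1-r0)) => (ne_of_gt hx : x ≠ 1-r0)))
      rwa [hv1'] at this
    have t4 : Tendsto (fun r : ℝ => Real.exp (-L * r)) (𝓝[>] (1-r0)) (𝓝 (Real.exp (-L * (1-r0)))) :=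
      ((by fun_prop : Continuous fun r : ℝ => Real.exp (-L * r)).tendsto _).mono_left nhdsWithin_le_nhds
    have t5 := ((t2.pow 2).add (t1.mul t3)).mul t4
    have e0 : ((0:ℝ)^2 + 0 * 0) * Real.exp (-L * (1-r0)) = 0 := by simp
    rw [e0] at t5
    refine t5.congr (fun r => ?_)
    simp only [hG, hE, slope_def_field, hv1]
    ring
  have hright : ∀ r ∈ Ioo (1-r0) 1, v r = 0 := by
    intro r hr
    have hle : G r ≤ 0 := by
      refine ge_of_tendsto hlim ?_
      filter_upwards [Ioo_mem_nhdsGT hr.1] with s hs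
      exact hanti ⟨hs.1, hs.2.trans hr.2⟩ hr hs.2.le
    have hx : 0 < r - (1-r0) := by linarith [hr.1]
    have h3 : E r ≤ 0 := by
      by_contra hh
      have : 0 < G r := mul_pos (not_le.1 hh) (Real.exp_pos _)
      linarith
    have e8 : E r = (v' r)^2 + (v r)^2/(r-(1-r0)) := rfl
    have e9 : (v r)^2/(r-(1-r0)) ≤ 0 := by nlinarith [sq_nonneg (v' r)]
    have e10 : (v r)^2 ≤ 0 := by
      rw [div_le_iff₀ hx] at e9; linarith
    nlinarith [sq_nonneg (v r)]
  intro r hr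
  rcases lt_trichotomy r (1-r0) with h4 | h4 | h4
  · exact hz r ⟨hr.1, h4⟩
  · rw [h4]; exact hv1
  · exact hright r ⟨h4, hr.2⟩

lemma w_pos (hc : Coef ε r0) (h : RadSol ε lam ν v v' v'') (hne : ∃ r ∈ Ioo (0:ℝ) 1, v r ≠ 0) :
    0 < ∫ r in (0:ℝ)..(1 - r0), wd ε r0 r * (v r)^2 := by
  obtain ⟨r, hr, hvr⟩ := hne
  have : ∃ c ∈ Ioo 0 (1-r0), v c ≠ 0 := by
    by_contra hh
    push Not at hh
    exact hvr (h.uniq hc hh r hr)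
  obtain ⟨c, hcm, hv⟩ := this
  refine posint (h.int_w hc) ?_ ?_ hcm ?_
  · intro x hx
    exact mul_nonneg (hc.wd_pos hx.2).le (sq_nonneg _)
  · exact hc.wd_cont.mul ((h.cv.mono (Ioo_subset_Icc_self.trans (sub hc))).pow 2)
  · have := hc.wd_pos hcm.2
    positivity

lemma const_of_zero (hc : Coef ε r0) (h : RadSol ε 0 ν v v' v'') :
    ∀ r ∈ Ioo (0:ℝ) 1, v r = v 0 := by
  have he := h.energy hc
  have hq := q_nonpos (v := v) hc
  have hp := p_nonneg (v' := v') hc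
  have hp0 : ∫ r in (0:ℝ)..(1 - r0), pd ε r0 r * (v' r)^2 = 0 := by
    nlinarith [mul_nonneg (sq_nonneg (ν:ℝ)) (neg_nonneg.2 hq)]
  have hv' : ∀ r ∈ Ioo 0 (1-r0), v' r = 0 := by
    intro c hcm
    by_contra hv
    have hpc := hc.pd_pos hcm.2
    have := posint (h.int_p hc) (fun x hx => mul_nonneg (hc.pd_pos hx.2).le (sq_nonneg _))
      ((hc.pd_cont.mono Ioo_subset_Ioc_self).mul
        ((h.cv'.mono (Ioo_subset_Icc_self.trans (sub hc))).pow 2)) hcm (by positivity)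
    linarith
  have hconst : ∀ r ∈ Icc 0 (1-r0), v r = v 0 := by
    apply constant_of_derivWithin_zero
    · intro r hr; exact (h.d1 r (sub hc hr)).differentiableAt.differentiableWithinAt
    · intro r hr
      have hd := h.d1 r (sub hc ⟨hr.1, hr.2.le⟩)
      rw [hd.hasDerivWithinAt.derivWithin (uniqueDiffOn_Icc hc.pos2 r ⟨hr.1, hr.2.le⟩)]
      rcases eq_or_lt_of_le hr.1 with h0 | h0
      · subst h0
        have h1 : Tendsto v' (𝓝[>] 0) (𝓝 (v' 0)) :=
          (h.d2 0 (by constructor <;> norm_num)).continuousAt.tendsto.mono_left nhdsWithin_le_nhds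
        have h2 : Tendsto v' (𝓝[>] 0) (𝓝 0) := by
          refine tendsto_const_nhds.congr' ?_
          filter_upwards [Ioo_mem_nhdsGT hc.pos2] with x hx using (hv' x hx).symm
        exact tendsto_nhds_unique h1 h2
      · exact hv' r ⟨h0, hr.2⟩
  have hs : RadSol ε 0 ν (fun r => v r - v 0) v' v'' := by
    refine ⟨fun r hr => (h.d1 r hr).sub_const _, h.d2, ?_, fun _ => sub_self _⟩
    intro r hr
    have hode := h.ode r hr
    have : (ν:ℝ)^2 * v 0 = 0 := by
      by_cases hν : ν = 0
      · simp [hν]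
      · simp [h.z hν]
    have e : -(ν:ℝ)^2 * (v r - v 0) = -(ν:ℝ)^2 * v r := by linarith
    simp only [e, zero_mul]
    rw [zero_mul] at hode
    exact hode
  intro r hr
  have := hs.uniq hc (fun r hr => sub_eq_zero.2 (hconst r (Ioo_subset_Icc_self hr))) r hr
  linarith

end RadSol
lemma ext_const {F : ℂ → ℝ} {c : ℝ} (hF : ContinuousOn F (Metric.closedBall 0 1))
    (h : ∀ r ∈ Ioo (0:ℝ) 1, ∀ θ, F (pol r θ) = c) : ∀ z ∈ Metric.closedBall (0:ℂ) 1, F z = c := by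
  intro z hz
  have hz1 : ‖z‖ ≤ 1 := by simpa using hz
  have hc : ContinuousOn (fun t : ℝ => F (pol t z.arg)) (Icc 0 1) := by
    refine hF.comp (by unfold pol; fun_prop) ?_
    intro t ht
    simp only [Metric.mem_closedBall, dist_zero_right, pol, norm_mul, Complex.norm_exp_ofReal_mul_I,
      mul_one, Complex.norm_real, Real.norm_eq_abs, abs_of_nonneg ht.1]
    exact ht.2
  have h2 : EqOn (fun t : ℝ => F (pol t z.arg)) (fun _ => c) (Ioo 0 1) := fun r hr => h r hr _
  have h3 := h2.of_subset_closure hc continuousOn_const Ioo_subset_Icc_self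
    (by rw [closure_Ioo (by norm_num)])
  have h4 := h3 (⟨norm_nonneg z, hz1⟩ : ‖z‖ ∈ Icc (0:ℝ) 1)
  simpa [pol, Complex.norm_mul_exp_arg_mul_I] using h4

noncomputable def Ft (F : ℂ → ℝ) (r θ : ℝ) : ℝ := deriv (fun s : ℝ => F (pol r s)) θ

structure PolC2 (F : ℂ → ℝ) : Prop where
  hr : ∀ r ∈ Ioo (-1:ℝ) 1, ∀ θ, HasDerivAt (fun t => F (pol t θ)) (Fr F r θ) r
  hrr : ∀ r ∈ Ioo (-1:ℝ) 1, ∀ θ, HasDerivAt (fun t => Fr F t θ) (Frr F r θ) r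
  ht : ∀ r ∈ Ioo (-1:ℝ) 1, ∀ θ, HasDerivAt (fun s => F (pol r s)) (Ft F r θ) θ
  htt : ∀ r ∈ Ioo (-1:ℝ) 1, ∀ θ, HasDerivAt (fun s => Ft F r s) (Ftt F r θ) θ
  c0 : ContinuousOn (fun q : ℝ × ℝ => F (pol q.1 q.2)) (Ioo (-1) 1 ×ˢ univ)
  c1 : ContinuousOn (fun q : ℝ × ℝ => Fr F q.1 q.2) (Ioo (-1) 1 ×ˢ univ)
  c11 : ContinuousOn (fun q : ℝ × ℝ => Frr F q.1 q.2) (Ioo (-1) 1 ×ˢ univ)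
  c22 : ContinuousOn (fun q : ℝ × ℝ => Ftt F q.1 q.2) (Ioo (-1) 1 ×ˢ univ)

lemma polC2 {F : ℂ → ℝ} (hF : ContDiffOn ℝ 2 F (Metric.closedBall 0 1)) : PolC2 F := by
  set U : Set (ℝ × ℝ) := Ioo (-1) 1 ×ˢ univ with hU
  have hUo : IsOpen U := isOpen_Ioo.prod isOpen_univ
  set G : ℝ × ℝ → ℝ := fun q => F (pol q.1 q.2) with hG
  have hpol : ContDiff ℝ 2 (fun q : ℝ × ℝ => pol q.1 q.2) := by
    unfold pol
    have h1 : ContDiff ℝ 2 (fun q : ℝ × ℝ => ((q.1 : ℝ) : ℂ)) := Complex.ofRealCLM.contDiff.comp contDiff_fst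
    have h2 : ContDiff ℝ 2 (fun q : ℝ × ℝ => ((q.2 : ℝ) : ℂ)) := Complex.ofRealCLM.contDiff.comp contDiff_snd
    exact h1.mul ((h2.mul contDiff_const).cexp)
  have hGc : ContDiffOn ℝ 2 G U := by
    refine hF.comp hpol.contDiffOn ?_
    intro q hq
    simp only [Metric.mem_closedBall, dist_zero_right, pol, norm_mul, Complex.norm_exp_ofReal_mul_I,
      mul_one, Complex.norm_real, Real.norm_eq_abs]
    exact abs_le.2 ⟨hq.1.1.le, hq.1.2.le⟩
  have hfd : ∀ w : ℝ × ℝ, ContDiffOn ℝ 1 (fun q => fderiv ℝ G q w) U := fun w =>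
    (hGc.fderiv_of_isOpen hUo (by norm_num)).clm_apply contDiffOn_const
  have hfd2 : ∀ H : ℝ × ℝ → ℝ, ContDiffOn ℝ 1 H U → ∀ w, ContinuousOn (fun q => fderiv ℝ H q w) U :=
    fun H hH w => (hH.continuousOn_fderiv_of_isOpen hUo (by norm_num)).clm_apply continuousOn_const
  have dr : ∀ H : ℝ × ℝ → ℝ, ContDiffOn ℝ 1 H U → ∀ r ∈ Ioo (-1:ℝ) 1, ∀ θ,
      HasDerivAt (fun t => H (t, θ)) (fderiv ℝ H (r,θ) (1,0)) r := by
    intro H hH r hr θ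
    have hm : (r,θ) ∈ U := ⟨hr, mem_univ _⟩
    have h1 := ((hH.differentiableOn (by norm_num)).differentiableAt (hUo.mem_nhds hm)).hasFDerivAt
    have h2 : HasDerivAt (fun t : ℝ => (t, θ)) ((1:ℝ),(0:ℝ)) r :=
      (hasDerivAt_id r).prodMk (hasDerivAt_const r θ)
    exact h1.comp_hasDerivAt r h2
  have dt : ∀ H : ℝ × ℝ → ℝ, ContDiffOn ℝ 1 H U → ∀ r ∈ Ioo (-1:ℝ) 1, ∀ θ,
      HasDerivAt (fun t => H (r, t)) (fderiv ℝ H (r,θ) (0,1)) θ := by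
    intro H hH r hr θ
    have hm : (r,θ) ∈ U := ⟨hr, mem_univ _⟩
    have h1 := ((hH.differentiableOn (by norm_num)).differentiableAt (hUo.mem_nhds hm)).hasFDerivAt
    have h2 : HasDerivAt (fun t : ℝ => (r, t)) ((0:ℝ),(1:ℝ)) θ :=
      (hasDerivAt_const θ r).prodMk (hasDerivAt_id θ)
    exact h1.comp_hasDerivAt θ h2
  have hG1 : ContDiffOn ℝ 1 G U := hGc.of_le (by norm_num)
  have eFr : ∀ r ∈ Ioo (-1:ℝ) 1, ∀ θ, Fr F r θ = fderiv ℝ G (r,θ) (1,0) := fun r hr θ =>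
    (dr G hG1 r hr θ).deriv
  have eFt : ∀ r ∈ Ioo (-1:ℝ) 1, ∀ θ, Ft F r θ = fderiv ℝ G (r,θ) (0,1) := fun r hr θ =>
    (dt G hG1 r hr θ).deriv
  have drr : ∀ r ∈ Ioo (-1:ℝ) 1, ∀ θ, HasDerivAt (fun t => Fr F t θ)
      (fderiv ℝ (fun q => fderiv ℝ G q (1,0)) (r,θ) (1,0)) r := by
    intro r hr θ
    refine (dr _ (hfd (1,0)) r hr θ).congr_of_eventuallyEq ?_
    filter_upwards [isOpen_Ioo.mem_nhds hr] with t ht using eFr t ht θ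
  have dtt : ∀ r ∈ Ioo (-1:ℝ) 1, ∀ θ, HasDerivAt (fun s => Ft F r s)
      (fderiv ℝ (fun q => fderiv ℝ G q (0,1)) (r,θ) (0,1)) θ := by
    intro r hr θ
    refine (dt _ (hfd (0,1)) r hr θ).congr_of_eventuallyEq ?_
    exact Eventually.of_forall (fun s => eFt r hr s)
  have eFrr : ∀ r ∈ Ioo (-1:ℝ) 1, ∀ θ, Frr F r θ =
      fderiv ℝ (fun q => fderiv ℝ G q (1,0)) (r,θ) (1,0) := fun r hr θ => (drr r hr θ).deriv
  have eFtt : ∀ r ∈ Ioo (-1:ℝ) 1, ∀ θ, Ftt F r θ =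
      fderiv ℝ (fun q => fderiv ℝ G q (0,1)) (r,θ) (0,1) := fun r hr θ => (dtt r hr θ).deriv
  refine ⟨?_, ?_, ?_, ?_, hGc.continuousOn, ?_, ?_, ?_⟩
  · intro r hr θ; rw [eFr r hr]; exact dr G hG1 r hr θ
  · intro r hr θ; rw [eFrr r hr]; exact drr r hr θ
  · intro r hr θ; rw [eFt r hr]; exact dt G hG1 r hr θ
  · intro r hr θ; rw [eFtt r hr]; exact dtt r hr θ
  · exact (hfd (1,0)).continuousOn.congr (fun q hq => eFr q.1 hq.1 q.2)
  · exact (hfd2 _ (hfd (1,0)) (1,0)).congr (fun q hq => eFrr q.1 hq.1 q.2)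
  · exact (hfd2 _ (hfd (0,1)) (0,1)).congr (fun q hq => eFtt q.1 hq.1 q.2)

lemma slice {f : ℝ → ℝ → ℝ} (hf : ContinuousOn (fun q : ℝ × ℝ => f q.1 q.2) (Ioo (-1) 1 ×ˢ univ))
    {r : ℝ} (hr : r ∈ Ioo (-1:ℝ) 1) : Continuous (f r) := by
  have : ContinuousOn (fun θ : ℝ => f r θ) univ :=
    hf.comp (f := fun θ : ℝ => (r, θ)) (by fun_prop) (fun θ _ => ⟨hr, mem_univ _⟩)
  exact continuousOn_univ.1 this

lemma param {f f' : ℝ → ℝ → ℝ}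
    (hf : ContinuousOn (fun q : ℝ × ℝ => f q.1 q.2) (Ioo (-1) 1 ×ˢ univ))
    (hf' : ContinuousOn (fun q : ℝ × ℝ => f' q.1 q.2) (Ioo (-1) 1 ×ˢ univ))
    (hd : ∀ r ∈ Ioo (-1:ℝ) 1, ∀ θ, HasDerivAt (fun t => f t θ) (f' r θ) r)
    {r : ℝ} (hr : r ∈ Ioo (-1:ℝ) 1) :
    HasDerivAt (fun t => ∫ θ in (0:ℝ)..(2*π), f t θ) (∫ θ in (0:ℝ)..(2*π), f' r θ) r := by
  obtain ⟨δ, hδ, hb⟩ := Metric.nhds_basis_closedBall.mem_iff.1 (isOpen_Ioo.mem_nhds hr)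
  have hK : IsCompact (Metric.closedBall r δ ×ˢ Icc 0 (2*π)) :=
    (isCompact_closedBall r δ).prod isCompact_Icc
  obtain ⟨M, hM⟩ := hK.exists_bound_of_continuousOn
    (hf'.mono (prod_mono hb (subset_univ _)))
  refine (intervalIntegral.hasDerivAt_integral_of_dominated_loc_of_deriv_le (bound := fun _ => M)
    (Metric.closedBall_mem_nhds r hδ) ?_ ((slice hf hr).intervalIntegrable _ _)
    ((slice hf' hr).aestronglyMeasurable) ?_ (by simp) ?_).2
  · filter_upwards [isOpen_Ioo.mem_nhds hr] with t ht using (slice hf ht).aestronglyMeasurable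
  · refine Eventually.of_forall (fun θ hθ t ht => ?_)
    rw [uIoc_of_le (by positivity)] at hθ
    exact hM (t, θ) ⟨ht, hθ.1.le, hθ.2⟩
  · exact Eventually.of_forall (fun θ _ t ht => hd t (hb ht) θ)

lemma angular {f f1 f2 g g1 g2 : ℝ → ℝ}
    (hf : ∀ θ, HasDerivAt f (f1 θ) θ) (hf1 : ∀ θ, HasDerivAt f1 (f2 θ) θ) (hf2 : Continuous f2)
    (hg : ∀ θ, HasDerivAt g (g1 θ) θ) (hg1 : ∀ θ, HasDerivAt g1 (g2 θ) θ) (hg2 : Continuous g2)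
    (pf : f (2*π) = f 0) (pf1 : f1 (2*π) = f1 0) (pg : g (2*π) = g 0) (pg1 : g1 (2*π) = g1 0) :
    ∫ θ in (0:ℝ)..(2*π), (f θ * g2 θ - g θ * f2 θ) = 0 := by
  have cf : Continuous f := continuous_iff_continuousAt.2 fun θ => (hf θ).continuousAt
  have cg : Continuous g := continuous_iff_continuousAt.2 fun θ => (hg θ).continuousAt
  rw [intervalIntegral.integral_eq_sub_of_hasDerivAt (f := fun θ => f θ * g1 θ - g θ * f1 θ)]
  · simp only [pf, pf1, pg, pg1, sub_self]
  · intro θ _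
    refine (((hf θ).mul (hg1 θ)).sub ((hg θ).mul (hf1 θ))).congr_deriv ?_
    ring
  · exact Continuous.intervalIntegrable (by fun_prop) _ _

lemma pol_per (r θ : ℝ) : pol r (θ + 2*π) = pol r θ := by
  unfold pol
  congr 1
  push_cast
  rw [add_mul, Complex.exp_add, Complex.exp_two_pi_mul_I, mul_one]

lemma pol_2pi (r : ℝ) : pol r (2*π) = pol r 0 := by
  have := pol_per r 0
  rwa [zero_add] at this

lemma Ft_2pi (F : ℂ → ℝ) (r : ℝ) : Ft F r (2*π) = Ft F r 0 := by
  unfold Ft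
  have := deriv_comp_add_const (fun s : ℝ => F (pol r s)) (2*π) 0
  simp only [pol_per, zero_add] at this
  exact this.symm

lemma pol_zero (θ : ℝ) : pol 0 θ = 0 := by simp [pol]

/-- Fourier modes of a solution. -/
lemma mode {ε lam : ℝ} {F : ℂ → ℝ} (hS : IsDiscSol ε lam F) (ν : ℕ) {T T' : ℝ → ℝ}
    (hT : ∀ θ, HasDerivAt T (T' θ) θ) (hT' : ∀ θ, HasDerivAt T' (-(ν:ℝ)^2 * T θ) θ)
    (pT : T (2*π) = T 0) (pT' : T' (2*π) = T' 0) :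
    RadSol ε lam ν (fun r => ∫ θ in (0:ℝ)..(2*π), F (pol r θ) * T θ)
      (fun r => ∫ θ in (0:ℝ)..(2*π), Fr F r θ * T θ)
      (fun r => ∫ θ in (0:ℝ)..(2*π), Frr F r θ * T θ) := by
  have hP := polC2 hS.1
  have cT : Continuous T := continuous_iff_continuousAt.2 fun θ => (hT θ).continuousAt
  have cT2 : ContinuousOn (fun q : ℝ × ℝ => T q.2) (Ioo (-1) 1 ×ˢ univ) := by fun_prop
  refine ⟨?_, ?_, ?_, ?_⟩
  · intro r hr
    exact param (f := fun r θ => F (pol r θ) * T θ) (f' := fun r θ => Fr F r θ * T θ)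
      (hP.c0.mul cT2) (hP.c1.mul cT2) (fun r hr θ => (hP.hr r hr θ).mul_const _) hr
  · intro r hr
    exact param (f := fun r θ => Fr F r θ * T θ) (f' := fun r θ => Frr F r θ * T θ)
      (hP.c1.mul cT2) (hP.c11.mul cT2) (fun r hr θ => (hP.hrr r hr θ).mul_const _) hr
  · intro r hr
    have hr' : r ∈ Ioo (-1:ℝ) 1 := ⟨by linarith [hr.1], hr.2⟩
    have k0 := slice (f := fun r θ => F (pol r θ)) hP.c0 hr'
    have k1 := slice (f := fun r θ => Fr F r θ) hP.c1 hr'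
    have k11 := slice (f := fun r θ => Frr F r θ) hP.c11 hr'
    have k22 := slice (f := fun r θ => Ftt F r θ) hP.c22 hr'
    have ha := angular (hP.ht r hr') (hP.htt r hr') k22 hT hT' (by fun_prop)
      (by rw [pol_2pi]) (Ft_2pi F r) pT pT'
    have i0 : IntervalIntegrable (fun θ => F (pol r θ) * T θ) volume 0 (2*π) :=
      (k0.mul cT).intervalIntegrable _ _
    have i1 : IntervalIntegrable (fun θ => Fr F r θ * T θ) volume 0 (2*π) :=
      (k1.mul cT).intervalIntegrable _ _
    have i11 : IntervalIntegrable (fun θ => Frr F r θ * T θ) volume 0 (2*π) :=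
      (k11.mul cT).intervalIntegrable _ _
    have i22 : IntervalIntegrable (fun θ => Ftt F r θ * T θ) volume 0 (2*π) :=
      (k22.mul cT).intervalIntegrable _ _
    have e22 : ∫ θ in (0:ℝ)..(2*π), Ftt F r θ * T θ =
        -(ν:ℝ)^2 * ∫ θ in (0:ℝ)..(2*π), F (pol r θ) * T θ := by
      rw [← intervalIntegral.integral_const_mul]
      have h1 : ∫ θ in (0:ℝ)..(2*π), (F (pol r θ) * (-(ν:ℝ)^2 * T θ) - T θ * Ftt F r θ) =
        (∫ θ in (0:ℝ)..(2*π), -(ν:ℝ)^2 * (F (pol r θ) * T θ)) - ∫ θ in (0:ℝ)..(2*π), Ftt F r θ * T θ := by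
        rw [← intervalIntegral.integral_sub (i0.const_mul _) i22]
        congr 1; ext θ; ring
      rw [h1] at ha
      linarith
    rw [← e22]
    have hpt : ∀ θ : ℝ, phi11 ε (1-r) * (1/r) * (Fr F r θ * T θ) + phi11 ε (1-r) * (1/r^2) * (Ftt F r θ * T θ)
        + phi22 ε (1-r) * (Frr F r θ * T θ) + phi2d ε (1-r) * (Fr F r θ * T θ) = lam * (F (pol r θ) * T θ) := by
      intro θ
      have := hS.2 r ⟨hr.1, hr.2.le⟩ θ
      linear_combination T θ * this
    have hint : ∫ θ in (0:ℝ)..(2*π), (phi11 ε (1-r) * (1/r) * (Fr F r θ * T θ) + phi11 ε (1-r) * (1/r^2) * (Ftt F r θ * T θ)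
        + phi22 ε (1-r) * (Frr F r θ * T θ) + phi2d ε (1-r) * (Fr F r θ * T θ)) =
        ∫ θ in (0:ℝ)..(2*π), lam * (F (pol r θ) * T θ) := by
      congr 1; ext θ; exact hpt θ
    rw [intervalIntegral.integral_add (((i1.const_mul _).add (i22.const_mul _)).add (i11.const_mul _)) (i1.const_mul _),
      intervalIntegral.integral_add ((i1.const_mul _).add (i22.const_mul _)) (i11.const_mul _),
      intervalIntegral.integral_add (i1.const_mul _) (i22.const_mul _)] at hint
    simp only [intervalIntegral.integral_const_mul] at hint
    linear_combination hint
  · intro hν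
    simp only [pol_zero, intervalIntegral.integral_const_mul]
    have ha := angular (f := fun _ => (1:ℝ)) (f1 := fun _ => 0) (f2 := fun _ => 0)
      (fun θ => hasDerivAt_const θ _) (fun θ => hasDerivAt_const θ _) continuous_const hT hT'
      (by fun_prop) rfl rfl pT pT'
    simp only [one_mul, mul_zero, sub_zero, intervalIntegral.integral_const_mul] at ha
    have : -(ν:ℝ)^2 ≠ 0 := by
      have : (ν:ℝ) ≠ 0 := Nat.cast_ne_zero.2 hν
      exact neg_ne_zero.2 (pow_ne_zero 2 this)
    rcases mul_eq_zero.1 ha with h | h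
    · exact absurd h this
    · rw [h, mul_zero]

lemma mode_cos {ε lam : ℝ} {F : ℂ → ℝ} (hS : IsDiscSol ε lam F) (ν : ℕ) :
    RadSol ε lam ν (fun r => ∫ θ in (0:ℝ)..(2*π), F (pol r θ) * cos (ν * θ))
      (fun r => ∫ θ in (0:ℝ)..(2*π), Fr F r θ * cos (ν * θ))
      (fun r => ∫ θ in (0:ℝ)..(2*π), Frr F r θ * cos (ν * θ)) := by
  have hl : ∀ θ : ℝ, HasDerivAt (fun θ : ℝ => (ν:ℝ) * θ) (ν:ℝ) θ := fun θ => by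
    simpa using (hasDerivAt_id θ).const_mul (ν:ℝ)
  refine mode hS ν (T := fun θ => cos (ν * θ)) (T' := fun θ => -sin (ν * θ) * ν)
    (fun θ => (hl θ).cos) (fun θ => ?_) ?_ ?_
  · exact ((hl θ).sin.neg.mul_const (ν:ℝ)).congr_deriv (by ring)
  · simp [Real.cos_nat_mul_two_pi]
  · have : sin ((ν:ℝ) * (2*π)) = 0 := by
      have := Real.sin_nat_mul_pi (2*ν); push_cast at this; rw [← this]; congr 1; ring
    simp [this]

lemma mode_sin {ε lam : ℝ} {F : ℂ → ℝ} (hS : IsDiscSol ε lam F) (ν : ℕ) :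
    RadSol ε lam ν (fun r => ∫ θ in (0:ℝ)..(2*π), F (pol r θ) * sin (ν * θ))
      (fun r => ∫ θ in (0:ℝ)..(2*π), Fr F r θ * sin (ν * θ))
      (fun r => ∫ θ in (0:ℝ)..(2*π), Frr F r θ * sin (ν * θ)) := by
  have hl : ∀ θ : ℝ, HasDerivAt (fun θ : ℝ => (ν:ℝ) * θ) (ν:ℝ) θ := fun θ => by
    simpa using (hasDerivAt_id θ).const_mul (ν:ℝ)
  refine mode hS ν (T := fun θ => sin (ν * θ)) (T' := fun θ => cos (ν * θ) * ν)
    (fun θ => (hl θ).sin) (fun θ => ?_) ?_ ?_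
  · exact ((hl θ).cos.mul_const (ν:ℝ)).congr_deriv (by ring)
  · have : sin ((ν:ℝ) * (2*π)) = 0 := by
      have := Real.sin_nat_mul_pi (2*ν); push_cast at this; rw [← this]; congr 1; ring
    simp [this]
  · simp [Real.cos_nat_mul_two_pi]

lemma fourier_const {f : ℝ → ℝ} (hc : Continuous f) (hp : ∀ θ, f (θ + 2*π) = f θ)
    (h1 : ∀ n : ℕ, n ≠ 0 → ∫ θ in (0:ℝ)..(2*π), f θ * cos (n * θ) = 0)
    (h2 : ∀ n : ℕ, n ≠ 0 → ∫ θ in (0:ℝ)..(2*π), f θ * sin (n * θ) = 0) (x : ℝ) :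
    f x * (2*π) = ∫ θ in (0:ℝ)..(2*π), f θ := by
  haveI : Fact (0 < 2*π) := ⟨by positivity⟩
  have hper : Function.Periodic (fun x => (f x : ℂ)) (2*π) := fun θ => by simp [hp]
  let g : C(AddCircle (2*π), ℂ) := ⟨hper.lift, by
    apply continuous_quot_lift
    exact Complex.continuous_ofReal.comp hc⟩
  have hg : ∀ x : ℝ, g (x : AddCircle (2*π)) = (f x : ℂ) := fun x => rfl
  have hcoef : ∀ n : ℤ, fourierCoeff g n = (1/(2*π) : ℝ) • ∫ θ in (0:ℝ)..(2*π),
      (((f θ * cos (n * θ) : ℝ) : ℂ) - ((f θ * sin (n*θ) : ℝ) : ℂ) * Complex.I) := by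
    intro n
    rw [fourierCoeff_eq_intervalIntegral _ _ 0, zero_add]
    congr 1
    congr 1
    ext θ
    rw [hg, fourier_coe_apply, smul_eq_mul]
    have : (2 * (π:ℂ) * Complex.I * ((-n : ℤ) : ℂ) * θ / ((2 * π : ℝ) : ℂ)) = ((-(n * θ) : ℝ) : ℂ) * Complex.I := by
      have : (π:ℂ) ≠ 0 := by exact_mod_cast Real.pi_ne_zero
      push_cast
      field_simp
    rw [this, Complex.exp_mul_I, ← Complex.ofReal_cos, ← Complex.ofReal_sin, Real.cos_neg, Real.sin_neg]
    push_cast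
    ring
  have h1' : ∀ n : ℤ, n ≠ 0 → ∫ θ in (0:ℝ)..(2*π), f θ * cos (n * θ) = 0 := by
    intro n hn
    obtain ⟨m, rfl | rfl⟩ := Int.eq_nat_or_neg n
    · have := h1 m (by rintro rfl; simp at hn)
      simpa only [Int.cast_natCast] using this
    · have := h1 m (by rintro rfl; simp at hn)
      simpa only [Int.cast_neg, Int.cast_natCast, neg_mul, Real.cos_neg] using this
  have h2' : ∀ n : ℤ, n ≠ 0 → ∫ θ in (0:ℝ)..(2*π), f θ * sin (n * θ) = 0 := by
    intro n hn
    obtain ⟨m, rfl | rfl⟩ := Int.eq_nat_or_neg n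
    · have := h2 m (by rintro rfl; simp at hn)
      simpa only [Int.cast_natCast] using this
    · have := h2 m (by rintro rfl; simp at hn)
      simp only [Int.cast_neg, Int.cast_natCast, neg_mul, Real.sin_neg, mul_neg,
        intervalIntegral.integral_neg, this, neg_zero]
  have hval : ∀ n : ℤ, fourierCoeff g n = (1/(2*π) : ℝ) •
      (((∫ θ in (0:ℝ)..(2*π), f θ * cos (n * θ) : ℝ) : ℂ) -
        ((∫ θ in (0:ℝ)..(2*π), f θ * sin (n * θ) : ℝ) : ℂ) * Complex.I) := by
    intro n
    rw [hcoef, intervalIntegral.integral_sub, intervalIntegral.integral_mul_const,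
      intervalIntegral.integral_ofReal, intervalIntegral.integral_ofReal]
    · exact Continuous.intervalIntegrable (by fun_prop) _ _
    · exact Continuous.intervalIntegrable (by fun_prop) _ _
  have hz : ∀ n : ℤ, n ≠ 0 → fourierCoeff g n = 0 := by
    intro n hn
    rw [hval, h1' n hn, h2' n hn]; simp
  have hs : Summable (fourierCoeff g) := (hasSum_single 0 (fun n hn => hz n hn)).summable
  have hh := has_pointwise_sum_fourier_series_of_summable hs (x : AddCircle (2*π))
  have hh2 := hasSum_single (f := fun i => fourierCoeff g i • fourier i (x : AddCircle (2*π))) 0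
    (fun n hn => by simp only [hz n hn, zero_smul])
  have := hh.unique hh2
  rw [hg, hval] at this
  simp only [fourier_zero, Int.cast_zero, zero_mul, Real.cos_zero, Real.sin_zero, mul_one, mul_zero,
    intervalIntegral.integral_zero, Complex.ofReal_zero, sub_zero, smul_eq_mul, Complex.real_smul] at this
  have h3 : f x = 1/(2*π) * ∫ θ in (0:ℝ)..(2*π), f θ := by exact_mod_cast this
  rw [h3]
  field_simp
lemma part1 {ε r0 : ℝ} (hc : Coef ε r0) (lam : ℝ) (ν : ℕ) (F : ℂ → ℝ) (v v' : ℝ → ℝ)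
    (hS : IsDiscSol ε lam F)
    (hv : ∀ r ∈ Ioc (0:ℝ) 1, ∀ θ : ℝ, F (pol r θ) = v r * Real.cos (ν*θ))
    (hd : ∀ r ∈ Ioc (0:ℝ) 1, HasDerivAt v (v' r) r)
    (hne : ∃ z ∈ Metric.closedBall (0:ℂ) 1, F z ≠ 0) :
    lam = ((∫ r in (0:ℝ)..(1 - r0), pd ε r0 r * (v' r)^2) -
            (ν:ℝ)^2 * ∫ r in (0:ℝ)..(1 - r0), qd ε r0 r * (v r)^2) /
          (∫ r in (0:ℝ)..(1 - r0), wd ε r0 r * (v r)^2) ∧ 0 ≤ lam := by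
  have hP := polC2 hS.1
  have e0 : ∀ r ∈ Ioc (0:ℝ) 1, F (pol r 0) = v r := by
    intro r hr; rw [hv r hr 0]; simp
  have e1 : ∀ r ∈ Ioo (0:ℝ) 1, Fr F r 0 = v' r := by
    intro r hr
    have h1 := hP.hr r ⟨by linarith [hr.1], hr.2⟩ 0
    have h2 := hd r ⟨hr.1, hr.2.le⟩
    refine h1.unique (h2.congr_of_eventuallyEq ?_)
    filter_upwards [isOpen_Ioo.mem_nhds hr] with t ht using e0 t ⟨ht.1, ht.2.le⟩
  have hl : ∀ θ : ℝ, HasDerivAt (fun θ : ℝ => (ν:ℝ) * θ) (ν:ℝ) θ := fun θ => by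
    simpa using (hasDerivAt_id θ).const_mul (ν:ℝ)
  have hR : RadSol ε lam ν (fun r => F (pol r 0)) (fun r => Fr F r 0) (fun r => Frr F r 0) := by
    refine ⟨fun r hr => hP.hr r hr 0, fun r hr => hP.hrr r hr 0, ?_, ?_⟩
    · intro r hr
      have h := hS.2 r ⟨hr.1, hr.2.le⟩ 0
      have ht : Ftt F r 0 = -(ν:ℝ)^2 * F (pol r 0) := by
        unfold Ftt
        have g0 : (fun s : ℝ => F (pol r s)) = fun s => v r * cos (ν * s) :=
          funext fun s => hv r ⟨hr.1, hr.2.le⟩ s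
        have g1 : deriv (fun s : ℝ => F (pol r s)) = fun s => v r * (-sin (ν * s) * ν) := by
          rw [g0]; ext s
          exact ((hl s).cos.const_mul (v r)).deriv
        rw [g1]
        have := (((hl 0).sin.neg.mul_const (ν:ℝ)).const_mul (v r)).deriv
        refine Eq.trans this ?_
        rw [e0 r ⟨hr.1, hr.2.le⟩]
        simp
        ring
      rw [ht] at h
      exact h
    · intro hν
      have hν' : (ν:ℝ) ≠ 0 := Nat.cast_ne_zero.2 hν
      set θ : ℝ := π / 2 / ν with hθ
      have h1 : Tendsto (fun t : ℝ => F (pol t θ)) (𝓝[>] 0) (𝓝 (F (pol 0 θ))) :=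
        ((hP.hr 0 (by norm_num) θ).continuousAt.tendsto).mono_left nhdsWithin_le_nhds
      have h2 : Tendsto (fun t : ℝ => F (pol t θ)) (𝓝[>] 0) (𝓝 0) := by
        refine tendsto_const_nhds.congr' ?_
        filter_upwards [Ioc_mem_nhdsGT (show (0:ℝ) < 1 by norm_num)] with t ht
        rw [hv t ht, hθ, mul_div_cancel₀ _ hν', Real.cos_pi_div_two, mul_zero]
      have := tendsto_nhds_unique h1 h2
      rw [pol_zero] at this
      simpa only [pol_zero] using this
  have hne' : ∃ r ∈ Ioo (0:ℝ) 1, F (pol r 0) ≠ 0 := by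
    by_contra hcon
    push Not at hcon
    obtain ⟨z, hz, hz'⟩ := hne
    apply hz'
    refine ext_const hS.1.continuousOn (fun r hr θ => ?_) z hz
    rw [hv r ⟨hr.1, hr.2.le⟩, ← e0 r ⟨hr.1, hr.2.le⟩, hcon r hr, zero_mul]
  have hE := hR.energy hc
  have hW := hR.w_pos hc hne'
  have hq := RadSol.q_nonpos (v := fun r => F (pol r 0)) hc
  have hp := RadSol.p_nonneg (v' := fun r => Fr F r 0) hc
  have hin : ∀ r ∈ Set.uIoc (0:ℝ) (1-r0), r ∈ Ioo (0:ℝ) 1 := by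
    intro r hr
    rw [uIoc_of_le hc.pos2.le] at hr
    exact ⟨hr.1, hr.2.trans_lt hc.lt2⟩
  have i1 : ∫ r in (0:ℝ)..(1 - r0), pd ε r0 r * (v' r)^2 = ∫ r in (0:ℝ)..(1 - r0), pd ε r0 r * (Fr F r 0)^2 :=
    intervalIntegral.integral_congr_ae (Eventually.of_forall fun r hr => by
      rw [e1 r (hin r hr)])
  have i2 : ∫ r in (0:ℝ)..(1 - r0), qd ε r0 r * (v r)^2 = ∫ r in (0:ℝ)..(1 - r0), qd ε r0 r * (F (pol r 0))^2 :=
    intervalIntegral.integral_congr_ae (Eventually.of_forall fun r hr => by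
      rw [e0 r ⟨(hin r hr).1, (hin r hr).2.le⟩])
  have i3 : ∫ r in (0:ℝ)..(1 - r0), wd ε r0 r * (v r)^2 = ∫ r in (0:ℝ)..(1 - r0), wd ε r0 r * (F (pol r 0))^2 :=
    intervalIntegral.integral_congr_ae (Eventually.of_forall fun r hr => by
      rw [e0 r ⟨(hin r hr).1, (hin r hr).2.le⟩])
  rw [i1, i2, i3]
  have hlam := (eq_div_iff hW.ne').2 hE.symm
  refine ⟨hlam, ?_⟩
  rw [hlam]
  apply div_nonneg _ hW.le
  have : (ν:ℝ)^2 * (∫ r in (0:ℝ)..(1 - r0), qd ε r0 r * (F (pol r 0))^2) ≤ 0 :=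
    mul_nonpos_of_nonneg_of_nonpos (by positivity) hq
  linarith

lemma part2 {ε r0 : ℝ} (hc : Coef ε r0) (F : ℂ → ℝ) (hS : IsDiscSol ε 0 F) :
    ∀ z₁ ∈ Metric.closedBall (0:ℂ) 1, ∀ z₂ ∈ Metric.closedBall (0:ℂ) 1, F z₁ = F z₂ := by
  have hP := polC2 hS.1
  have key : ∀ z ∈ Metric.closedBall (0:ℂ) 1,
      F z = (∫ θ in (0:ℝ)..(2*π), F (pol 0 θ) * cos ((0:ℕ) * θ)) / (2*π) := by
    apply ext_const hS.1.continuousOn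
    intro r hr θ
    have hr' : r ∈ Ioo (-1:ℝ) 1 := ⟨by linarith [hr.1], hr.2⟩
    have := fourier_const (f := fun θ => F (pol r θ)) (slice (f := fun r θ => F (pol r θ)) hP.c0 hr')
      (fun θ => by rw [pol_per])
      (fun n hn => by
        have h := mode_cos hS n
        exact (h.const_of_zero hc r hr).trans (h.z hn))
      (fun n hn => by
        have h := mode_sin hS n
        exact (h.const_of_zero hc r hr).trans (h.z hn)) θ
    have h0 := (mode_cos hS 0).const_of_zero hc r hr
    rw [eq_div_iff (by positivity), this, ← h0]
    simp
  intro z₁ h₁ z₂ h₂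
  rw [key z₁ h₁, key z₂ h₂]

lemma part3 {ε r0 : ℝ} (hc : Coef ε r0) (lam₁ lam₂ : ℝ) (F₁ F₂ : ℂ → ℝ) (hne : lam₁ ≠ lam₂)
    (hS₁ : IsDiscSol ε lam₁ F₁) (hS₂ : IsDiscSol ε lam₂ F₂) :
    (∫ r in (0:ℝ)..(1 - r0), ∫ θ in (0:ℝ)..(2*π),
          wd ε r0 r * F₁ (pol r θ) * F₂ (pol r θ)) = 0 := by
  have hP := polC2 hS₁.1
  have hQ := polC2 hS₂.1
  have dI : ∀ r ∈ Ioo (-1:ℝ) 1, HasDerivAt (fun r => ∫ θ in (0:ℝ)..(2*π), F₁ (pol r θ) * F₂ (pol r θ))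
      (∫ θ in (0:ℝ)..(2*π), (Fr F₁ r θ * F₂ (pol r θ) + F₁ (pol r θ) * Fr F₂ r θ)) r := fun r hr =>
    param (f := fun r θ => F₁ (pol r θ) * F₂ (pol r θ))
      (f' := fun r θ => Fr F₁ r θ * F₂ (pol r θ) + F₁ (pol r θ) * Fr F₂ r θ)
      (hP.c0.mul hQ.c0) ((hP.c1.mul hQ.c0).add (hP.c0.mul hQ.c1))
      (fun r hr θ => (hP.hr r hr θ).mul (hQ.hr r hr θ)) hr
  have dA : ∀ r ∈ Ioo (-1:ℝ) 1, HasDerivAt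
      (fun r => ∫ θ in (0:ℝ)..(2*π), (F₁ (pol r θ) * Fr F₂ r θ - F₂ (pol r θ) * Fr F₁ r θ))
      (∫ θ in (0:ℝ)..(2*π), (F₁ (pol r θ) * Frr F₂ r θ - F₂ (pol r θ) * Frr F₁ r θ)) r := fun r hr =>
    param (f := fun r θ => F₁ (pol r θ) * Fr F₂ r θ - F₂ (pol r θ) * Fr F₁ r θ)
      (f' := fun r θ => F₁ (pol r θ) * Frr F₂ r θ - F₂ (pol r θ) * Frr F₁ r θ)
      ((hP.c0.mul hQ.c1).sub (hQ.c0.mul hP.c1)) ((hP.c0.mul hQ.c11).sub (hQ.c0.mul hP.c11))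
      (fun r hr θ => (((hP.hr r hr θ).mul (hQ.hrr r hr θ)).sub
        ((hQ.hr r hr θ).mul (hP.hrr r hr θ))).congr_deriv (by ring)) hr
  have hsub := RadSol.sub hc
  have hIi : Ioo (0:ℝ) (1-r0) ⊆ Ioo (-1) 1 := fun r hr => hsub ⟨hr.1.le, hr.2.le⟩
  obtain ⟨M, hM⟩ := (isCompact_Icc (a := (0:ℝ)) (b := 1-r0)).exists_bound_of_continuousOn
    (fun r hr => (dA r (hsub hr)).continuousAt.continuousWithinAt)
  have hH : IntervalIntegrable (fun r => (lam₁ - lam₂) *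
      (wd ε r0 r * ∫ θ in (0:ℝ)..(2*π), F₁ (pol r θ) * F₂ (pol r θ))) volume 0 (1-r0) := by
    apply IntervalIntegrable.const_mul
    apply hc.wd_int.mul_continuousOn
    rw [uIcc_of_le hc.pos2.le]
    exact fun r hr => (dI r (hsub hr)).continuousAt.continuousWithinAt
  have hf := hc.ftc (fun r hr => dA r (hIi hr)) (M := M)
    (fun r hr => hM r ⟨hr.1.le, hr.2.le⟩) hH ?_
  · rw [intervalIntegral.integral_const_mul] at hf
    rcases mul_eq_zero.1 hf with h | h
    · exact absurd (sub_eq_zero.1 h) hne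
    · rw [← h]
      congr 1; ext r
      rw [← intervalIntegral.integral_const_mul]
      congr 1; ext θ; ring
  · intro r hr
    have hr' := hIi hr
    have hcn := hc.cneg r hr.2
    have k0 := slice (f := fun r θ => F₁ (pol r θ)) hP.c0 hr'
    have k1 := slice (f := fun r θ => Fr F₁ r θ) hP.c1 hr'
    have k11 := slice (f := fun r θ => Frr F₁ r θ) hP.c11 hr'
    have k22 := slice (f := fun r θ => Ftt F₁ r θ) hP.c22 hr'
    have l0 := slice (f := fun r θ => F₂ (pol r θ)) hQ.c0 hr'
    have l1 := slice (f := fun r θ => Fr F₂ r θ) hQ.c1 hr'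
    have l11 := slice (f := fun r θ => Frr F₂ r θ) hQ.c11 hr'
    have l22 := slice (f := fun r θ => Ftt F₂ r θ) hQ.c22 hr'
    have ha := angular (hP.ht r hr') (hP.htt r hr') k22 (hQ.ht r hr') (hQ.htt r hr') l22
      (by rw [pol_2pi]) (Ft_2pi F₁ r) (by rw [pol_2pi]) (Ft_2pi F₂ r)
    have i0 : IntervalIntegrable (fun θ => F₁ (pol r θ) * Fr F₂ r θ - F₂ (pol r θ) * Fr F₁ r θ) volume 0 (2*π) :=
      ((k0.mul l1).sub (l0.mul k1)).intervalIntegrable _ _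
    have i1 : IntervalIntegrable (fun θ => F₁ (pol r θ) * Frr F₂ r θ - F₂ (pol r θ) * Frr F₁ r θ) volume 0 (2*π) :=
      ((k0.mul l11).sub (l0.mul k11)).intervalIntegrable _ _
    have i2 : IntervalIntegrable (fun θ => F₁ (pol r θ) * Ftt F₂ r θ - F₂ (pol r θ) * Ftt F₁ r θ) volume 0 (2*π) :=
      ((k0.mul l22).sub (l0.mul k22)).intervalIntegrable _ _
    have hr1 : r ≤ 1 := (hr.2.trans hc.lt2).le
    have hint : ∫ θ in (0:ℝ)..(2*π), ((phi11 ε (1-r) * (1/r) + phi2d ε (1-r)) *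
          (F₁ (pol r θ) * Fr F₂ r θ - F₂ (pol r θ) * Fr F₁ r θ)
        + phi11 ε (1-r) * (1/r^2) * (F₁ (pol r θ) * Ftt F₂ r θ - F₂ (pol r θ) * Ftt F₁ r θ)
        + phi22 ε (1-r) * (F₁ (pol r θ) * Frr F₂ r θ - F₂ (pol r θ) * Frr F₁ r θ)) =
        ∫ θ in (0:ℝ)..(2*π), (lam₂ - lam₁) * (F₁ (pol r θ) * F₂ (pol r θ)) := by
      congr 1; ext θ
      have h1 := hS₁.2 r ⟨hr.1, hr1⟩ θ
      have h2 := hS₂.2 r ⟨hr.1, hr1⟩ θ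
      linear_combination F₁ (pol r θ) * h2 - F₂ (pol r θ) * h1
    rw [intervalIntegral.integral_add ((i0.const_mul _).add (i2.const_mul _)) (i1.const_mul _),
      intervalIntegral.integral_add (i0.const_mul _) (i2.const_mul _)] at hint
    simp only [intervalIntegral.integral_const_mul] at hint
    rw [ha] at hint
    have hr0 : r ≠ 0 := hr.1.ne'
    generalize (∫ θ in (0:ℝ)..(2*π), (F₁ (pol r θ) * Fr F₂ r θ - F₂ (pol r θ) * Fr F₁ r θ)) = X at *
    generalize (∫ θ in (0:ℝ)..(2*π), (F₁ (pol r θ) * Frr F₂ r θ - F₂ (pol r θ) * Frr F₁ r θ)) = Y at *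
    generalize (∫ θ in (0:ℝ)..(2*π), F₁ (pol r θ) * F₂ (pol r θ)) = Z at *
    have hc0 := hcn.ne
    unfold wd BB
    have hB : (phi11 ε (1-r) + r * phi2d ε (1-r)) / (r * phi22 ε (1-r)) =
        (phi11 ε (1-r) * (1/r) + phi2d ε (1-r)) / phi22 ε (1-r) := by
      field_simp
    rw [hB]
    have : Y = ((lam₂ - lam₁) * Z - (phi11 ε (1-r) * (1/r) + phi2d ε (1-r)) * X) / phi22 ε (1-r) := by
      rw [eq_div_iff hc0]; linear_combination hint
    rw [this]
    ring

theorem stmt17 :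
    ∃ ε₀ > (0:ℝ), ∀ ε : ℝ, 0 < ε → ε ≤ ε₀ →
      ∀ r0 ∈ Ioo (0:ℝ) ε, phi22 ε r0 = 0 →
      (∀ (lam : ℝ) (ν : ℕ) (F : ℂ → ℝ) (v v' : ℝ → ℝ),
        IsDiscSol ε lam F →
        (∀ r ∈ Ioc (0:ℝ) 1, ∀ θ : ℝ, F (pol r θ) = v r * Real.cos (ν*θ)) →
        (∀ r ∈ Ioc (0:ℝ) 1, HasDerivAt v (v' r) r) →
        (∃ z ∈ Metric.closedBall (0:ℂ) 1, F z ≠ 0) →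
        lam = ((∫ r in (0:ℝ)..(1 - r0), pd ε r0 r * (v' r)^2) -
                (ν:ℝ)^2 * ∫ r in (0:ℝ)..(1 - r0), qd ε r0 r * (v r)^2) /
              (∫ r in (0:ℝ)..(1 - r0), wd ε r0 r * (v r)^2) ∧
          0 ≤ lam) ∧
      (∀ c : ℝ, IsDiscSol ε 0 (fun _ => c)) ∧
      (∀ F : ℂ → ℝ, IsDiscSol ε 0 F →
        ∀ z₁ ∈ Metric.closedBall (0:ℂ) 1, ∀ z₂ ∈ Metric.closedBall (0:ℂ) 1,
          F z₁ = F z₂) ∧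
      (∀ (lam₁ lam₂ : ℝ) (F₁ F₂ : ℂ → ℝ),
        lam₁ ≠ lam₂ →
        IsDiscSol ε lam₁ F₁ → (∃ z ∈ Metric.closedBall (0:ℂ) 1, F₁ z ≠ 0) →
        IsDiscSol ε lam₂ F₂ → (∃ z ∈ Metric.closedBall (0:ℂ) 1, F₂ z ≠ 0) →
        (∫ r in (0:ℝ)..(1 - r0), ∫ θ in (0:ℝ)..(2*π),
          wd ε r0 r * F₁ (pol r θ) * F₂ (pol r θ)) = 0) := by
  refine ⟨1/4, by norm_num, fun ε e0 e1 r0 hr hz => ?_⟩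
  have hc : Coef ε r0 := coef e0 e1 hr hz
  refine ⟨fun lam ν F v v' hS hv hd hne => part1 hc lam ν F v v' hS hv hd hne, ?_,
    fun F hS => part2 hc F hS, fun lam₁ lam₂ F₁ F₂ hne h1 _ h2 _ => part3 hc lam₁ lam₂ F₁ F₂ hne h1 h2⟩
  intro c
  refine ⟨contDiffOn_const, fun r _ θ => ?_⟩
  simp [Fr, Frr, Ftt]
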